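/- (Schneider) Let Ω be a lattice in ℂ with Weierstrass function ℘ and invariants g₂, g₃. Let p ∈ ℂ ∖ Ω and let α be a nonzero complex number. Then at least one of the five numbers α, g₂, g₃, e^{αp}, ℘(p) is transcendental over ℚ. -/

import Mathlib

/-!
The proof is Schneider's method. Suppose all five numbers are algebraic. By
`℘'² = 4℘³ - g₂℘ - g₃` the number `℘'(p)` is algebraic too, so the field `K` generated by
`α, g₂, e^{αp}, ℘(p), ℘'(p)` is a number field, of degree `D` say. By the duplication formula for
`℘` (a special case of `add_identity`), `e^{αz}`, `℘` and `℘'` take values in `K` at the points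
`2^k p` off the lattice; if some `2^k p` is a period, its multiples can be added to `p` instead. In
both cases there are infinitely many such points (`goodSet_infinite`), of which `6(2D + 1)` are used.

The derivatives of polynomials in `e^{αz}, ℘, ℘'` are again such polynomials, with coefficients in
`ℤ[α, g₂/2]`, because `℘'' = 6℘² - g₂/2`. Siegel's lemma (`siegel`) therefore provides a nonzero
polynomial in `e^{αz}` and `℘`, with small integral coefficients in `K`, which vanishes to a high
order `n` at the chosen points. The functions `e^{αz}` and `℘` are algebraically independent
(`indep`: for some period `ω` the numbers `e^{αnω}` are distinct, while `℘` takes infinitely many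
values), so there is a first order `s ≥ n` at which some derivative at some point does not vanish.

That derivative is bounded in two ways. Since `℘ = h/σ²` with `σ` and `h` entire of order at most
three (`exists_denominator`, which rests on the Weierstrass product), the Schwarz lemma on a disc of
radius `s^{1/6}` gives `|·| ≤ (B s²)^s / s^{(2D + 1)s}` (`upper_bound`). All conjugates are at most
`(B s²)^s` (`house_T_le`), and Liouville's inequality `one_le_norm_mul_house_pow` says that the
product of all conjugates has absolute value at least one. This bounds `s` (`core`), a contradiction.

Mathlib defines `℘` by its partial-fraction series; `wP_eq` shows that this agrees with the
definition as `-(σ'/σ)'` off the lattice.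
-/

open Complex

noncomputable section

/-- The lattice `ℤω₁ + ℤω₂`, as a set of complex numbers. -/
def LatticePts (ω₁ ω₂ : ℂ) : Set ℂ := {z | ∃ m n : ℤ, z = m * ω₁ + n * ω₂}

/-- `ω₁, ω₂` are the basis of a lattice: they are `ℝ`-linearly independent. -/
def IsLatticeBasis (ω₁ ω₂ : ℂ) : Prop := LinearIndependent ℝ ![ω₁, ω₂]

/-- The nonzero lattice points. -/
def LatticePts' (ω₁ ω₂ : ℂ) : Set ℂ := {w | w ∈ LatticePts ω₁ ω₂ ∧ w ≠ 0}

/-- The Weierstrass sigma function of the lattice `ℤω₁ + ℤω₂`: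
`σ(z) = z ∏_{ω ∈ Ω∖{0}} (1 − z/ω) exp(z/ω + z²/(2ω²))`. -/
def wSigma (ω₁ ω₂ : ℂ) (z : ℂ) : ℂ :=
  z * ∏' w : LatticePts' ω₁ ω₂,
    (1 - z / (w : ℂ)) * Complex.exp (z / w + z ^ 2 / (2 * (w : ℂ) ^ 2))

/-- The Weierstrass zeta function `ζ = σ'/σ`. -/
def wZeta (ω₁ ω₂ : ℂ) (z : ℂ) : ℂ := deriv (wSigma ω₁ ω₂) z / wSigma ω₁ ω₂ z

/-- The Weierstrass elliptic function `℘ = -ζ'`. -/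
def wP (ω₁ ω₂ : ℂ) (z : ℂ) : ℂ := - deriv (wZeta ω₁ ω₂) z

/-- The invariant `g₂ = 60 Σ_{ω ∈ Ω∖{0}} ω⁻⁴` of the lattice. -/
def g2 (ω₁ ω₂ : ℂ) : ℂ := 60 * ∑' w : LatticePts' ω₁ ω₂, ((w : ℂ) ^ 4)⁻¹

/-- The invariant `g₃ = 140 Σ_{ω ∈ Ω∖{0}} ω⁻⁶` of the lattice. -/
def g3 (ω₁ ω₂ : ℂ) : ℂ := 140 * ∑' w : LatticePts' ω₁ ω₂, ((w : ℂ) ^ 6)⁻¹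

/-- The quasi-period `η(ω) = ζ(z + ω) − ζ(z)` (independent of `z`; we evaluate at the
point `(ω₁+ω₂)/3`, which is never a pole of `ζ`, nor is its translate by a lattice point). -/
def wEta (ω₁ ω₂ : ℂ) (ω : ℂ) : ℂ :=
  wZeta ω₁ ω₂ ((ω₁ + ω₂) / 3 + ω) - wZeta ω₁ ω₂ ((ω₁ + ω₂) / 3)

/-- The field of endomorphisms `k = {α ∈ ℂ : αΩ ⊆ Ω} ⊗_ℤ ℚ`, as a set of complex numbers:
the `α ∈ ℂ` such that `mα` stabilizes the lattice for some nonzero integer `m`. -/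
def endQ (ω₁ ω₂ : ℂ) : Set ℂ :=
  {α | ∃ m : ℤ, m ≠ 0 ∧ ∀ w ∈ LatticePts ω₁ ω₂, (m : ℂ) * α * w ∈ LatticePts ω₁ ω₂}

/-- The transcendence degree over `ℚ` of the subfield `ℚ(S)` of `ℂ` generated by `S` is
at least `d`: there are `d` algebraically independent elements in `ℚ(S)`. -/
def trdegGe (S : Set ℂ) (d : ℕ) : Prop :=
  ∃ x : Fin d → ℂ, (∀ i, x i ∈ IntermediateField.adjoin ℚ S) ∧ AlgebraicIndependent ℚ x

/-! ### Weierstrass factors, growth of entire functions and lattice sums -/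

namespace SchTwo

open Filter Topology

/-- The Weierstrass primary factor of genus two. -/
def wE (u : ℂ) : ℂ := (1 - u) * Complex.exp (u + u ^ 2 / 2)

lemma hasDerivAt_wE (u : ℂ) : HasDerivAt wE (-u ^ 2 * Complex.exp (u + u ^ 2 / 2)) u := by
  have h1 : HasDerivAt (fun u : ℂ => 1 - u) (-1) u := by
    simpa using (hasDerivAt_id u).const_sub 1
  have h2 : HasDerivAt (fun u : ℂ => u + u ^ 2 / 2) (1 + u) u := by
    have := (hasDerivAt_id u).add (((hasDerivAt_id u).pow 2).div_const 2)
    refine this.congr_deriv ?_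
    simp
  refine (h1.mul h2.cexp).congr_deriv ?_
  ring

lemma norm_wE_sub_one_le (u : ℂ) :
    ‖wE u - 1‖ ≤ ‖u‖ ^ 3 * Real.exp (‖u‖ + ‖u‖ ^ 2 / 2) := by
  have key := (convex_closedBall (0 : ℂ) ‖u‖).norm_image_sub_le_of_norm_hasDerivWithin_le
    (f := wE) (f' := fun v => -v ^ 2 * Complex.exp (v + v ^ 2 / 2))
    (C := ‖u‖ ^ 2 * Real.exp (‖u‖ + ‖u‖ ^ 2 / 2))
    (fun x _ => (hasDerivAt_wE x).hasDerivWithinAt) (x := 0) (y := u) ?_ (by simp) (by simp)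
  · simp only [sub_zero] at key
    have h0 : wE 0 = 1 := by simp [wE]
    rw [h0] at key
    calc _ ≤ _ := key
      _ = _ := by ring
  · intro v hv
    have hv : ‖v‖ ≤ ‖u‖ := by simpa using hv
    rw [norm_mul, norm_neg, norm_pow]
    gcongr
    rw [Complex.norm_exp]
    gcongr
    calc (v + v ^ 2 / 2).re ≤ ‖v + v ^ 2 / 2‖ := Complex.re_le_norm _
      _ ≤ ‖v‖ + ‖v ^ 2 / 2‖ := norm_add_le _ _
      _ = ‖v‖ + ‖v‖ ^ 2 / 2 := by simp
      _ ≤ _ := by gcongr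

/-- A single cubic bound valid for all `u`: it makes `∏ E(z/ω)` of order at most three, since
`∑ |ω|⁻³` converges. -/
lemma norm_wE_le (u : ℂ) : ‖wE u‖ ≤ Real.exp (5 * ‖u‖ ^ 3) := by
  rcases le_total ‖u‖ 1 with h | h
  · have h1 := norm_wE_sub_one_le u
    have h2 : Real.exp (‖u‖ + ‖u‖ ^ 2 / 2) ≤ 5 := by
      have : ‖u‖ + ‖u‖ ^ 2 / 2 ≤ 1 + 1 / 2 := by
        have : ‖u‖ ^ 2 ≤ 1 := pow_le_one₀ (norm_nonneg _) h
        linarith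
      have h3 : Real.exp (1 + 1/2) ≤ 5 := by
        have h4 : Real.exp (1 + 1/2) ^ 2 ≤ 5 ^ 2 := by
          rw [← Real.exp_nat_mul]
          have : ((2:ℕ) : ℝ) * (1 + 1/2) = ((3:ℕ):ℝ) * 1 := by norm_num
          rw [this, Real.exp_nat_mul]
          have h5 := Real.exp_one_lt_d9
          have : Real.exp 1 ≤ 2.72 := by linarith
          calc Real.exp 1 ^ 3 ≤ 2.72 ^ 3 := by gcongr
            _ ≤ _ := by norm_num
        exact (pow_le_pow_iff_left₀ (by positivity) (by norm_num) (by norm_num)).1 h4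
      exact (Real.exp_le_exp.2 this).trans h3
    calc ‖wE u‖ = ‖(wE u - 1) + 1‖ := by ring_nf
      _ ≤ ‖wE u - 1‖ + 1 := by simpa using norm_add_le (wE u - 1) 1
      _ ≤ ‖u‖ ^ 3 * 5 + 1 := by
        gcongr; exact h1.trans (by gcongr)
      _ ≤ _ := by
        have := Real.add_one_le_exp (5 * ‖u‖ ^ 3); linarith
  · have : ‖1 - u‖ ≤ Real.exp ‖u‖ := by
      calc ‖1 - u‖ ≤ 1 + ‖u‖ := by simpa using norm_sub_le 1 u
        _ ≤ _ := by linarith [Real.add_one_le_exp ‖u‖]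
    have h2 : ‖Complex.exp (u + u ^ 2 / 2)‖ ≤ Real.exp (‖u‖ + ‖u‖ ^ 2 / 2) := by
      rw [Complex.norm_exp]
      gcongr
      calc (u + u ^ 2 / 2).re ≤ ‖u + u ^ 2 / 2‖ := Complex.re_le_norm _
        _ ≤ ‖u‖ + ‖u ^ 2 / 2‖ := norm_add_le _ _
        _ = ‖u‖ + ‖u‖ ^ 2 / 2 := by simp
    rw [wE, norm_mul]
    calc _ ≤ Real.exp ‖u‖ * Real.exp (‖u‖ + ‖u‖ ^ 2 / 2) := by gcongr
      _ = Real.exp (2 * ‖u‖ + ‖u‖ ^ 2 / 2) := by rw [← Real.exp_add]; ring_nf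
      _ ≤ _ := by
        gcongr
        have h3 : ‖u‖ ≤ ‖u‖ ^ 3 := le_self_pow₀ h (by norm_num)
        have h4 : ‖u‖ ^ 2 ≤ ‖u‖ ^ 3 := pow_le_pow_right₀ h (by norm_num)
        nlinarith

/-- Entire functions of order at most three and finite type. -/
def Growth (g : ℂ → ℂ) : Prop :=
  Differentiable ℂ g ∧ ∃ C : ℝ, 0 ≤ C ∧ ∀ z, ‖g z‖ ≤ Real.exp (C * (1 + ‖z‖) ^ 3)

lemma Growth.mul {f g : ℂ → ℂ} (hf : Growth f) (hg : Growth g) : Growth (fun z => f z * g z) := by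
  obtain ⟨hf, C, hC, hf'⟩ := hf
  obtain ⟨hg, D, hD, hg'⟩ := hg
  refine ⟨hf.mul hg, C + D, by positivity, fun z => ?_⟩
  rw [norm_mul, add_mul, Real.exp_add]
  gcongr
  exacts [hf' z, hg' z]

lemma one_le_aux (z : ℂ) : (1 : ℝ) ≤ (1 + ‖z‖) ^ 3 :=
  one_le_pow₀ (by linarith [norm_nonneg z])

lemma Growth.sub {f g : ℂ → ℂ} (hf : Growth f) (hg : Growth g) : Growth (fun z => f z - g z) := by
  obtain ⟨hf, C, hC, hf'⟩ := hf
  obtain ⟨hg, D, hD, hg'⟩ := hg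
  refine ⟨hf.sub hg, C + D + 1, by positivity, fun z => ?_⟩
  have h1 := one_le_aux z
  have h2 : Real.exp (C * (1 + ‖z‖) ^ 3) ≤ Real.exp ((C + D) * (1 + ‖z‖) ^ 3) := by
    gcongr; linarith
  have h3 : Real.exp (D * (1 + ‖z‖) ^ 3) ≤ Real.exp ((C + D) * (1 + ‖z‖) ^ 3) := by
    gcongr; linarith
  calc ‖f z - g z‖ ≤ ‖f z‖ + ‖g z‖ := norm_sub_le _ _
    _ ≤ 2 * Real.exp ((C + D) * (1 + ‖z‖) ^ 3) := by linarith [hf' z, hg' z]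
    _ ≤ Real.exp ((1 + ‖z‖) ^ 3) * Real.exp ((C + D) * (1 + ‖z‖) ^ 3) := by
      gcongr
      linarith [Real.add_one_le_exp ((1 + ‖z‖) ^ 3)]
    _ = _ := by rw [← Real.exp_add]; ring_nf

lemma growth_const (c : ℂ) : Growth (fun _ => c) := by
  refine ⟨by fun_prop, ‖c‖, norm_nonneg _, fun z => ?_⟩
  have h1 := one_le_aux z
  calc ‖c‖ ≤ ‖c‖ * (1 + ‖z‖) ^ 3 := le_mul_of_one_le_right (norm_nonneg _) h1
    _ ≤ _ := by linarith [Real.add_one_le_exp (‖c‖ * (1 + ‖z‖) ^ 3)]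

lemma growth_exp_mul (α : ℂ) : Growth (fun z => Complex.exp (α * z)) := by
  refine ⟨by fun_prop, ‖α‖, norm_nonneg _, fun z => ?_⟩
  rw [Complex.norm_exp]
  gcongr
  calc (α * z).re ≤ ‖α * z‖ := Complex.re_le_norm _
    _ = ‖α‖ * ‖z‖ := norm_mul _ _
    _ ≤ _ := by
      gcongr
      have : (1 + ‖z‖) ≤ (1 + ‖z‖) ^ 3 := le_self_pow₀ (by linarith [norm_nonneg z]) (by norm_num)
      linarith

/-- By Cauchy's estimate on discs of radius one. -/
lemma Growth.deriv {f : ℂ → ℂ} (hf : Growth f) : Growth (deriv f) := by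
  obtain ⟨hf, C, hC, hf'⟩ := hf
  refine ⟨fun z => (hf.analyticAt z).deriv.differentiableAt, C * 8, by positivity, fun z => ?_⟩
  have := Complex.norm_deriv_le_of_forall_mem_sphere_norm_le (c := z) (R := 1) (f := f)
    (C := Real.exp (C * (2 + ‖z‖) ^ 3)) one_pos hf.diffContOnCl ?_
  · refine this.trans ?_
    rw [div_one]
    rw [Real.exp_le_exp]
    have : (2 + ‖z‖) ≤ 2 * (1 + ‖z‖) := by linarith [norm_nonneg z]
    calc C * (2 + ‖z‖) ^ 3 ≤ C * (2 * (1 + ‖z‖)) ^ 3 := by gcongr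
      _ = _ := by ring
  · intro w hw
    refine (hf' w).trans ?_
    have h1 : ‖w - z‖ = 1 := by simpa using hw
    have : ‖w‖ ≤ 1 + ‖z‖ := by
      calc ‖w‖ = ‖(w - z) + z‖ := by ring_nf
        _ ≤ _ := by rw [← h1]; exact norm_add_le _ _
    have h2 : 1 + ‖w‖ ≤ 2 + ‖z‖ := by linarith
    gcongr

lemma mem_lattice_iff (L : PeriodPair) (z : ℂ) : z ∈ L.lattice ↔ z ∈ LatticePts L.ω₁ L.ω₂ := by
  rw [PeriodPair.mem_lattice]
  simp only [LatticePts, Set.mem_ofPred_eq]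
  constructor <;> rintro ⟨m, n, h⟩ <;> exact ⟨m, n, h.symm⟩

/-- Sums over the nonzero lattice points are sums over the whole lattice, when the (junk) value of
the summand at `0` is zero. -/
lemma tsum_lattice (L : PeriodPair) (f : ℂ → ℂ) (h0 : f 0 = 0) :
    ∑' w : LatticePts' L.ω₁ L.ω₂, f w = ∑' l : L.lattice, f l := by
  have h1 := tsum_subtype (LatticePts' L.ω₁ L.ω₂) f
  have h2 := tsum_subtype (L.lattice : Set ℂ) f
  rw [h1]
  refine Eq.trans ?_ h2.symm
  refine tsum_congr fun z => ?_
  by_cases hz : z = 0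
  · subst hz; simp [h0]
  · have : z ∈ LatticePts' L.ω₁ L.ω₂ ↔ z ∈ (L.lattice : Set ℂ) :=
      ⟨fun h => (mem_lattice_iff L z).2 h.1, fun h => ⟨(mem_lattice_iff L z).1 h, hz⟩⟩
    by_cases h : z ∈ (L.lattice : Set ℂ)
    · rw [Set.indicator_of_mem h, Set.indicator_of_mem (this.2 h)]
    · rw [Set.indicator_of_notMem h, Set.indicator_of_notMem (fun h' => h (this.1 h'))]

lemma g2_eq (L : PeriodPair) : g2 L.ω₁ L.ω₂ = L.g₂ := by
  rw [g2, PeriodPair.g₂, PeriodPair.G, tsum_lattice L (fun w => (w ^ 4)⁻¹) (by simp)]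

lemma g3_eq (L : PeriodPair) : g3 L.ω₁ L.ω₂ = L.g₃ := by
  rw [g3, PeriodPair.g₃, PeriodPair.G, tsum_lattice L (fun w => (w ^ 6)⁻¹) (by simp)]

lemma summable_norm_cube (L : PeriodPair) :
    Summable fun w : LatticePts' L.ω₁ L.ω₂ => (‖(w : ℂ)‖ ^ 3)⁻¹ := by
  have h : Summable fun l : L.lattice => (‖(l : ℂ)‖ ^ 3)⁻¹ := by
    have h3 : Summable fun l : L.lattice => ‖l‖ ^ (-3 : ℝ) :=
      ZLattice.summable_norm_rpow _ _ (by simp; norm_num)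
    refine h3.congr fun l => ?_
    rw [Real.rpow_neg (norm_nonneg _), show (3 : ℝ) = ((3 : ℕ) : ℝ) by norm_num, Real.rpow_natCast]
    rfl
  let φ : LatticePts' L.ω₁ L.ω₂ → L.lattice := fun w => ⟨w, (mem_lattice_iff L _).2 w.2.1⟩
  have hφ : Function.Injective φ := fun a b hab => by
    ext; exact congrArg (fun l : L.lattice => (l : ℂ)) hab
  exact (h.comp_injective hφ).congr fun w => rfl

end SchTwo

/-! ### The sigma function and the identification of `℘` with its partial-fraction series -/

namespace SchTwo

open Filter Topology

/-- The infinite product `σ(z)/z`. -/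
def wS (L : PeriodPair) (z : ℂ) : ℂ := ∏' w : LatticePts' L.ω₁ L.ω₂, wE (z / (w : ℂ))

lemma wSigma_eq (L : PeriodPair) (z : ℂ) : wSigma L.ω₁ L.ω₂ z = z * wS L z := by
  rw [wSigma, wS]
  congr 1
  refine tprod_congr fun w => ?_
  rw [wE]
  congr 2
  field

/-- The Weierstrass product converges locally uniformly, because `E(u) = 1 + O(u³)`. -/
lemma hasProd_wS_ball (L : PeriodPair) (r : ℝ) (hr : 0 < r) :
    HasProdLocallyUniformlyOn (fun (w : LatticePts' L.ω₁ L.ω₂) z => wE (z / (w : ℂ))) (wS L)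
      (Metric.ball 0 r) := by
  have hs : Summable fun w : LatticePts' L.ω₁ L.ω₂ => r ^ 3 * (‖(w : ℂ)‖ ^ 3)⁻¹ :=
    (summable_norm_cube L).mul_left _
  have := (hs.mul_right (Real.exp (1 + 1 ^ 2 / 2))).hasProdLocallyUniformlyOn_one_add
    (f := fun (w : LatticePts' L.ω₁ L.ω₂) z => wE (z / (w : ℂ)) - 1)
    (K := Metric.ball (0 : ℂ) r) Metric.isOpen_ball ?_ ?_
  · simpa only [add_sub_cancel] using! this
  · filter_upwards [hs.tendsto_cofinite_zero.eventually_le_const one_pos] with w hw z hz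
    have hz : ‖z‖ ≤ r := by simpa using (Metric.mem_ball.1 hz).le
    have hw0 : 0 < ‖(w : ℂ)‖ := norm_pos_iff.2 w.2.2
    have h3 : ‖z / (w : ℂ)‖ ^ 3 ≤ r ^ 3 * (‖(w : ℂ)‖ ^ 3)⁻¹ := by
      rw [norm_div, div_pow, div_eq_mul_inv]; gcongr
    have h1 : ‖z / (w : ℂ)‖ ≤ 1 := by
      by_contra! h
      have := one_lt_pow₀ h (n := 3) (by norm_num)
      linarith
    refine (norm_wE_sub_one_le _).trans ?_
    gcongr
  · intro w
    refine Continuous.continuousOn (Continuous.sub ?_ continuous_const)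
    have : Continuous wE := continuous_iff_continuousAt.2 fun u => (hasDerivAt_wE u).continuousAt
    fun_prop

lemma differentiable_wE : Differentiable ℂ wE := fun u => (hasDerivAt_wE u).differentiableAt

lemma differentiable_wS (L : PeriodPair) : Differentiable ℂ (wS L) := by
  intro z
  have hd : DifferentiableOn ℂ (wS L) (Metric.ball 0 (‖z‖ + 1)) := by
    have h := hasProd_wS_ball L (‖z‖ + 1) (by positivity)
    rw [hasProdLocallyUniformlyOn_iff_tendstoLocallyUniformlyOn] at h
    refine h.differentiableOn (Eventually.of_forall fun s => ?_) Metric.isOpen_ball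
    refine DifferentiableOn.fun_finsetProd fun w _ => ?_
    exact (differentiable_wE.comp (differentiable_id.div_const _)).differentiableOn
  exact hd.differentiableAt (Metric.isOpen_ball.mem_nhds (by simp))

lemma hasProd_wS (L : PeriodPair) (z : ℂ) :
    HasProd (fun w : LatticePts' L.ω₁ L.ω₂ => wE (z / (w : ℂ))) (wS L z) :=
  (hasProd_wS_ball L (‖z‖ + 1) (by positivity)).hasProd (by simp)

lemma growth_wS (L : PeriodPair) : Growth (wS L) := by
  set T := ∑' w : LatticePts' L.ω₁ L.ω₂, (‖(w : ℂ)‖ ^ 3)⁻¹ with hT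
  have hT0 : 0 ≤ T := tsum_nonneg fun w => by positivity
  refine ⟨differentiable_wS L, 5 * T, by positivity, fun z => ?_⟩
  refine le_of_tendsto (hasProd_wS L z).norm (Eventually.of_forall fun s => ?_)
  calc ∏ w ∈ s, ‖wE (z / (w : ℂ))‖ ≤ ∏ w ∈ s, Real.exp (5 * ‖z / (w : ℂ)‖ ^ 3) := by
        gcongr; exact norm_wE_le _
    _ = Real.exp (∑ w ∈ s, 5 * ‖z / (w : ℂ)‖ ^ 3) := (Real.exp_sum _ _).symm
    _ ≤ _ := by
      rw [Real.exp_le_exp]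
      calc ∑ w ∈ s, 5 * ‖z / (w : ℂ)‖ ^ 3
          = 5 * (∑ w ∈ s, (‖(w : ℂ)‖ ^ 3)⁻¹) * ‖z‖ ^ 3 := by
            rw [Finset.mul_sum, Finset.sum_mul]
            refine Finset.sum_congr rfl fun w _ => ?_
            rw [norm_div, div_pow, div_eq_mul_inv]; ring
        _ ≤ 5 * T * (1 + ‖z‖) ^ 3 := by
            gcongr
            · exact (summable_norm_cube L).sum_le_tsum _ fun w _ => by positivity
            · linarith

lemma wE_ne_zero {u : ℂ} (hu : u ≠ 1) : wE u ≠ 0 :=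
  mul_ne_zero (sub_ne_zero.2 hu.symm) (Complex.exp_ne_zero _)

/-- An absolutely convergent product of nonzero factors does not vanish. -/
lemma wS_ne_zero (L : PeriodPair) {z : ℂ} (hz : z ∉ LatticePts L.ω₁ L.ω₂) : wS L z ≠ 0 := by
  have h1 : ∀ w : LatticePts' L.ω₁ L.ω₂, 1 + (wE (z / (w : ℂ)) - 1) ≠ 0 := by
    intro w
    rw [add_sub_cancel]
    refine wE_ne_zero fun h => hz ?_
    rw [div_eq_one_iff_eq w.2.2] at h
    rw [h]; exact w.2.1
  have := tprod_one_add_ne_zero_of_summable h1 ?_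
  · simpa only [add_sub_cancel] using! this
  · have hs : Summable fun w : LatticePts' L.ω₁ L.ω₂ => ‖z‖ ^ 3 * (‖(w : ℂ)‖ ^ 3)⁻¹ :=
      (summable_norm_cube L).mul_left _
    refine Summable.of_norm_bounded_eventually (hs.mul_right (Real.exp (1 + 1 ^ 2 / 2))) ?_
    filter_upwards [hs.tendsto_cofinite_zero.eventually_le_const one_pos] with w hw
    have h3 : ‖z / (w : ℂ)‖ ^ 3 = ‖z‖ ^ 3 * (‖(w : ℂ)‖ ^ 3)⁻¹ := by
      rw [norm_div, div_pow, div_eq_mul_inv]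
    have h1 : ‖z / (w : ℂ)‖ ≤ 1 := by
      by_contra! h
      have := one_lt_pow₀ h (n := 3) (by norm_num)
      linarith
    rw [norm_norm]
    refine (norm_wE_sub_one_le _).trans ?_
    rw [h3]
    gcongr

/-- The summands of `ζ(z) - 1/z`, in the form `z²/(ω²(z-ω))`, which vanishes for `ω = 0`
with the junk value of division. -/
def zTerm (l z : ℂ) : ℂ := z ^ 2 / (l ^ 2 * (z - l))

lemma logDeriv_wE_div {w z : ℂ} (hw : w ≠ 0) (hz : z ≠ w) :
    logDeriv (fun z => wE (z / w)) z = zTerm w z := by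
  have h1 : HasDerivAt (fun z => wE (z / w))
      (-(z / w) ^ 2 * Complex.exp (z / w + (z / w) ^ 2 / 2) * (1 / w)) z :=
    HasDerivAt.comp z (h₂ := wE) (h := fun z => z / w) (hasDerivAt_wE (z / w))
      ((hasDerivAt_id' z).div_const w)
  rw [logDeriv_apply, h1.deriv, zTerm, wE]
  have h2 : Complex.exp (z / w + (z / w) ^ 2 / 2) ≠ 0 := Complex.exp_ne_zero _
  have h3 : 1 - z / w ≠ 0 := by
    rw [sub_ne_zero]; intro h; exact hz ((div_eq_one_iff_eq hw).1 h.symm)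
  have h4 : z - w ≠ 0 := sub_ne_zero.2 hz
  have h5 : w - z ≠ 0 := sub_ne_zero.2 hz.symm
  have h6 : 1 - z / w = - (z - w) / w := by field_simp; ring
  rw [h6]
  field_simp

lemma zTerm_bound (r : ℝ) (hr : 0 < r) (s : ℂ) (hs : ‖s‖ < r) (l : ℂ) (h : 2 * r ≤ ‖l‖) :
    ‖zTerm l s‖ ≤ 2 * r ^ 2 * ‖l‖ ^ (-3 : ℝ) := by
  have hl : 0 < ‖l‖ := by linarith
  have h1 : ‖l‖ / 2 ≤ ‖s - l‖ := by
    rw [norm_sub_rev]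
    exact .trans (by linarith) (norm_sub_norm_le l s)
  rw [zTerm, norm_div, norm_mul, norm_pow, norm_pow, Real.rpow_neg hl.le,
    show (3 : ℝ) = ((3 : ℕ) : ℝ) by norm_num, Real.rpow_natCast]
  calc _ ≤ r ^ 2 / (‖l‖ ^ 2 * (‖l‖ / 2)) := by gcongr
    _ = _ := by field

lemma hasSumLocallyUniformly_zTerm (L : PeriodPair) :
    HasSumLocallyUniformly (fun (l : L.lattice) (z : ℂ) => zTerm l z)
      (fun z => ∑' l : L.lattice, zTerm l z) := by
  refine L.hasSumLocallyUniformly_aux (u := fun r l => 2 * r ^ 2 * ‖l‖ ^ (-3 : ℝ)) _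
    (fun _ _ ↦ (ZLattice.summable_norm_rpow _ _ (by simp; norm_num)).mul_left _) fun r hr ↦
    Filter.eventually_atTop.mpr ⟨2 * r, ?_⟩
  rintro _ h s hs l rfl
  exact zTerm_bound r hr s hs l h

lemma summable_zTerm (L : PeriodPair) (z : ℂ) :
    Summable fun l : L.lattice => zTerm l z := (hasSumLocallyUniformly_zTerm L).hasSum.summable

/-- `σ'/σ - 1/z` as a series, obtained by differentiating the product term by term. -/
lemma logDeriv_wS (L : PeriodPair) {z : ℂ} (hz : z ∉ LatticePts L.ω₁ L.ω₂) :
    logDeriv (wS L) z = ∑' l : L.lattice, zTerm l z := by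
  have hne : ∀ w : LatticePts' L.ω₁ L.ω₂, z ≠ w := fun w h => hz (h ▸ w.2.1)
  have hsum : Summable fun w : LatticePts' L.ω₁ L.ω₂ => zTerm (w : ℂ) z := by
    let φ : LatticePts' L.ω₁ L.ω₂ → L.lattice := fun w => ⟨w, (mem_lattice_iff L _).2 w.2.1⟩
    have hφ : Function.Injective φ := fun a b hab => by
      ext; exact congrArg (fun l : L.lattice => (l : ℂ)) hab
    exact ((summable_zTerm L z).comp_injective hφ).congr fun w => rfl
  have h := logDeriv_tprod_eq_tsum (ι := LatticePts' L.ω₁ L.ω₂)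
    (f := fun w z => wE (z / (w : ℂ))) (s := Metric.ball 0 (‖z‖ + 1)) (x := z)
    Metric.isOpen_ball (by simp)
    (fun w => wE_ne_zero fun h => hne w ((div_eq_one_iff_eq w.2.2).1 h))
    (fun w => (differentiable_wE.comp (differentiable_id.div_const _)).differentiableOn)
    (hsum.congr fun w => (logDeriv_wE_div w.2.2 (hne w)).symm)
    (hasProd_wS_ball L _ (by positivity)).multipliableLocallyUniformlyOn
    (wS_ne_zero L hz)
  rw [← tsum_lattice L (fun l => zTerm l z) (by simp [zTerm])]
  refine Eq.trans h (tsum_congr fun w => logDeriv_wE_div w.2.2 (hne w))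

lemma hasDerivAt_zTerm {l z : ℂ} (hl : l ≠ 0) (hz : z ≠ l) :
    HasDerivAt (zTerm l) (-(1 / (z - l) ^ 2 - 1 / l ^ 2)) z := by
  have hz' : z - l ≠ 0 := sub_ne_zero.2 hz
  have h := (((hasDerivAt_id' z).fun_pow 2)).fun_div (((hasDerivAt_id' z).sub_const l).const_mul (l ^ 2))
    (mul_ne_zero (pow_ne_zero 2 hl) hz')
  refine h.congr_deriv ?_
  field_simp
  ring

lemma isOpen_compl_lattice (L : PeriodPair) : IsOpen (L.lattice : Set ℂ)ᶜ :=
  L.isClosed_lattice.isOpen_compl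

lemma deriv_tsum_zTerm (L : PeriodPair) {z : ℂ} (hz : z ∉ L.lattice) :
    deriv (fun z => ∑' l : L.lattice, zTerm l z) z = - L.weierstrassPExcept 0 z := by
  have hd : ∀ l : L.lattice, ∀ x ∈ (L.lattice : Set ℂ)ᶜ, HasDerivAt (zTerm l)
      (-(if (l : ℂ) = 0 then 0 else (1 / (x - l) ^ 2 - 1 / (l : ℂ) ^ 2))) x := by
    intro l x hx
    split_ifs with h
    · rw [h, show zTerm 0 = fun _ => 0 by ext; simp [zTerm]]
      simpa using hasDerivAt_const x (0 : ℂ)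
    · exact hasDerivAt_zTerm h fun h' => hx (h' ▸ l.2)
  have h1 := ((hasSumLocallyUniformly_zTerm L).hasSumLocallyUniformlyOn
    (s := (L.lattice : Set ℂ)ᶜ))
  rw [hasSumLocallyUniformlyOn_iff_tendstoLocallyUniformlyOn] at h1
  have h2 := (h1.deriv (Eventually.of_forall fun s => ?_) (isOpen_compl_lattice L)).tendsto_at hz
  · have h3 := (L.hasSum_weierstrassPExcept 0 z).neg
    refine tendsto_nhds_unique h2 (Tendsto.congr (fun s => ?_) h3)
    simp only [Function.comp]
    refine (HasDerivAt.deriv ?_).symm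
    exact HasDerivAt.fun_sum fun l _ => hd l z hz
  · exact DifferentiableOn.fun_sum fun l _ x hx =>
      (hd l x hx).differentiableAt.differentiableWithinAt

/-- Off the lattice, the logarithmic-derivative definition of `℘` agrees with Mathlib's series. -/
lemma wP_eq (L : PeriodPair) {z : ℂ} (hz : z ∉ L.lattice) :
    wP L.ω₁ L.ω₂ z = L.weierstrassP z := by
  have hev : wZeta L.ω₁ L.ω₂ =ᶠ[𝓝 z] fun z => 1 / z + ∑' l : L.lattice, zTerm l z := by
    filter_upwards [(isOpen_compl_lattice L).mem_nhds hz] with x hx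
    have hx' : x ∉ LatticePts L.ω₁ L.ω₂ := fun h => hx ((mem_lattice_iff L x).2 h)
    have hx0 : x ≠ 0 := by rintro rfl; exact hx (zero_mem _)
    rw [← logDeriv_wS L hx', logDeriv_apply, wZeta,
      show wSigma L.ω₁ L.ω₂ = fun z => z * wS L z from funext (wSigma_eq L),
      ((hasDerivAt_id' x).fun_mul (differentiable_wS L x).hasDerivAt).deriv]
    have := wS_ne_zero L hx'
    field_simp
  have hz0 : z ≠ 0 := by rintro rfl; exact hz (zero_mem _)
  have hdiff : DifferentiableAt ℂ (fun z => ∑' l : L.lattice, zTerm l z) z := by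
    have : (fun z => ∑' l : L.lattice, zTerm l z) =ᶠ[𝓝 z] logDeriv (wS L) := by
      filter_upwards [(isOpen_compl_lattice L).mem_nhds hz] with x hx
      exact (logDeriv_wS L fun h => hx ((mem_lattice_iff L x).2 h)).symm
    refine DifferentiableAt.congr_of_eventuallyEq ?_ this
    exact (((differentiable_wS L).analyticAt z).deriv.differentiableAt).div
      (differentiable_wS L z) (wS_ne_zero L fun h => hz ((mem_lattice_iff L z).2 h))
  have h1 : HasDerivAt (fun z : ℂ => 1 / z) (-(z ^ 2)⁻¹) z := by
    simpa using hasDerivAt_inv hz0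
  rw [wP, hev.deriv_eq, (h1.fun_add hdiff.hasDerivAt).deriv, deriv_tsum_zTerm L hz,
    ← L.weierstrassPExcept_add (0 : L.lattice) z]
  simp

/-- The entire function `σ`, together with its growth. -/
lemma growth_wSigma (L : PeriodPair) : Growth (wSigma L.ω₁ L.ω₂) := by
  have hid : Growth (fun z => z) := by
    refine ⟨differentiable_id, 1, zero_le_one, fun z => ?_⟩
    have : (1 + ‖z‖) ≤ (1 + ‖z‖) ^ 3 := le_self_pow₀ (by linarith [norm_nonneg z]) (by norm_num)
    linarith [Real.add_one_le_exp (1 * (1 + ‖z‖) ^ 3)]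
  rw [show wSigma L.ω₁ L.ω₂ = fun z => z * wS L z from funext (wSigma_eq L)]
  exact hid.mul (growth_wS L)

lemma wSigma_ne_zero (L : PeriodPair) {z : ℂ} (hz : z ∉ L.lattice) : wSigma L.ω₁ L.ω₂ z ≠ 0 := by
  rw [wSigma_eq]
  refine mul_ne_zero ?_ (wS_ne_zero L fun h => hz ((mem_lattice_iff L z).2 h))
  rintro rfl; exact hz (zero_mem _)

/-- `℘` is a quotient `h/σ²` of entire functions of finite order, with `h = σ'² - σσ''`. -/
lemma exists_denominator (L : PeriodPair) : ∃ θ h : ℂ → ℂ, Growth θ ∧ Growth h ∧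
    ∀ z ∉ L.lattice, θ z ≠ 0 ∧ h z = θ z * L.weierstrassP z := by
  set s := wSigma L.ω₁ L.ω₂ with hs
  have hg : Growth s := growth_wSigma L
  refine ⟨fun z => s z * s z, fun z => deriv s z * deriv s z - s z * deriv (deriv s) z,
    hg.mul hg, (hg.deriv.mul hg.deriv).sub (hg.mul hg.deriv.deriv), fun z hz => ?_⟩
  have h0 : s z ≠ 0 := wSigma_ne_zero L hz
  refine ⟨mul_ne_zero h0 h0, ?_⟩
  rw [← wP_eq L hz, wP, show wZeta L.ω₁ L.ω₂ = fun z => deriv s z / s z from rfl,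
    ((hg.deriv.1 z).hasDerivAt.fun_div (hg.1 z).hasDerivAt h0).deriv]
  field_simp
  ring

end SchTwo

/-! ### Differential equations, the addition theorem and good points -/

namespace SchTwo

open Filter Topology

lemma countable_lattice (L : PeriodPair) : (L.lattice : Set ℂ).Countable :=
  Set.countable_coe_iff.1 (inferInstanceAs (Countable L.lattice))

/-- Lets the identity theorem be used on `ℂ` minus a lattice. -/
lemma isPreconnected_compl_countable {s : Set ℂ} (hs : s.Countable) : IsPreconnected sᶜ :=
  (hs.isPathConnected_compl_of_one_lt_rank (by
    rw [Complex.rank_real_complex]; norm_num)).isConnected.isPreconnected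

lemma hasDerivAt_P (L : PeriodPair) {z : ℂ} (hz : z ∉ L.lattice) :
    HasDerivAt L.weierstrassP (L.derivWeierstrassP z) z := by
  rw [← L.deriv_weierstrassP]
  exact (L.analyticOnNhd_weierstrassP z hz).differentiableAt.hasDerivAt

lemma tendsto_P (L : PeriodPair) :
    Tendsto L.weierstrassP (𝓝[≠] 0) (Bornology.cobounded ℂ) := by
  rw [tendsto_cobounded_iff_meromorphicOrderAt_neg (L.meromorphic_weierstrassP 0),
    L.order_weierstrassP 0 (zero_mem _)]
  decide

lemma eventually_notMem (L : PeriodPair) : ∀ᶠ z in 𝓝[≠] (0 : ℂ), z ∉ L.lattice := by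
  have h := L.compl_lattice_sdiff_singleton_mem_nhds 0
  filter_upwards [nhdsWithin_le_nhds h, self_mem_nhdsWithin] with z hz hz0 hzL
  exact hz ⟨hzL, hz0⟩

/-- `℘` is not constant, since it has a pole at `0`. -/
lemma P_not_const (L : PeriodPair) (c : ℂ) (h : ∀ z ∉ L.lattice, L.weierstrassP z = c) :
    False := by
  have h1 := (tendsto_norm_cobounded_atTop.comp (tendsto_P L)).eventually_gt_atTop ‖c‖
  obtain ⟨z, hz, hz'⟩ := (h1.and (eventually_notMem L)).exists
  simp only [Function.comp, h z hz'] at hz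
  exact lt_irrefl _ hz

lemma P_not_frequently (L : PeriodPair) {q : ℂ} (hq : q ∉ L.lattice) (c : ℂ) :
    ∀ᶠ z in 𝓝[≠] q, L.weierstrassP z ≠ c := by
  by_contra h
  refine P_not_const L c fun z hz => ?_
  refine L.analyticOnNhd_weierstrassP.eqOn_of_preconnected_of_frequently_eq
    (g := fun _ => c) analyticOnNhd_const
    (isPreconnected_compl_countable (countable_lattice L)) hq ?_ hz
  exact h

lemma derivP_not_frequently (L : PeriodPair) {q : ℂ} (hq : q ∉ L.lattice) :
    ∀ᶠ z in 𝓝[≠] q, L.derivWeierstrassP z ≠ 0 := by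
  by_contra h
  have h0 := L.analyticOnNhd_derivWeierstrassP.eqOn_zero_of_preconnected_of_frequently_eq_zero
    (isPreconnected_compl_countable (countable_lattice L)) hq
    h
  obtain ⟨a, ha⟩ := (isOpen_compl_lattice L).exists_is_const_of_deriv_eq_zero
    (isPreconnected_compl_countable (countable_lattice L))
    L.analyticOnNhd_weierstrassP.differentiableOn (by rw [L.deriv_weierstrassP]; exact h0)
  exact P_not_const L a ha

/-- `℘'' = 6℘² - g₂/2`. -/
lemma hasDerivAt_derivP (L : PeriodPair) {z : ℂ} (hz : z ∉ L.lattice) :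
    HasDerivAt L.derivWeierstrassP (6 * L.weierstrassP z ^ 2 - L.g₂ / 2) z := by
  have hd : ∀ {x}, x ∉ L.lattice → DifferentiableAt ℂ L.derivWeierstrassP x := fun {x} hx =>
    (L.analyticOnNhd_derivWeierstrassP x hx).differentiableAt
  have key : ∀ x ∉ L.lattice, L.derivWeierstrassP x *
      (deriv L.derivWeierstrassP x - (6 * L.weierstrassP x ^ 2 - L.g₂ / 2)) = 0 := by
    intro x hx
    have h1 := (hd hx).hasDerivAt.fun_pow 2
    have h2 := ((((hasDerivAt_P L hx).fun_pow 3).const_mul 4).fun_sub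
      ((hasDerivAt_P L hx).const_mul L.g₂)).sub_const L.g₃
    have h3 := h1.congr_of_eventuallyEq (f₁ := fun x =>
        4 * L.weierstrassP x ^ 3 - L.g₂ * L.weierstrassP x - L.g₃) (by
      filter_upwards [(isOpen_compl_lattice L).mem_nhds hx] with y hy
      exact (L.derivWeierstrassP_sq y hy).symm)
    have h4 := h3.unique h2
    push_cast at h4
    simp only [pow_one] at h4
    linear_combination h4 / 2
  have han : AnalyticOnNhd ℂ (fun x => deriv L.derivWeierstrassP x -
      (6 * L.weierstrassP x ^ 2 - L.g₂ / 2)) (L.lattice : Set ℂ)ᶜ := by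
    intro x hx
    exact (L.analyticOnNhd_derivWeierstrassP x hx).deriv.sub
      ((analyticAt_const.mul ((L.analyticOnNhd_weierstrassP x hx).pow 2)).sub analyticAt_const)
  have h0 := han.eqOn_zero_of_preconnected_of_frequently_eq_zero
    (isPreconnected_compl_countable (countable_lattice L)) hz (by
      refine Eventually.frequently ?_
      filter_upwards [derivP_not_frequently L hz,
        nhdsWithin_le_nhds ((isOpen_compl_lattice L).mem_nhds hz)] with x hx hx'
      exact (mul_eq_zero.1 (key x hx')).resolve_left hx) hz
  have h5 : deriv L.derivWeierstrassP z = 6 * L.weierstrassP z ^ 2 - L.g₂ / 2 :=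
    sub_eq_zero.1 h0
  rw [← h5]
  exact (hd hz).hasDerivAt

/-- `℘'` and `℘''` have no common zero: otherwise `h = ℘ - ℘(q)` satisfies
`h'² = h²(4h + 12℘(q))` with `h(q) = 0`, which is impossible by comparing orders of vanishing. -/
lemma not_both_zero (L : PeriodPair) {q : ℂ} (hq : q ∉ L.lattice)
    (h1 : L.derivWeierstrassP q = 0) : 12 * L.weierstrassP q ^ 2 ≠ L.g₂ := by
  intro h2
  set x := L.weierstrassP q with hx
  have hc := L.derivWeierstrassP_sq q hq
  rw [h1, ← hx] at hc
  have haP := L.analyticOnNhd_weierstrassP q hq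
  have ha : AnalyticAt ℂ (fun z => L.weierstrassP z - x) q := haP.sub analyticAt_const
  have ha2 : AnalyticAt ℂ (fun z => 4 * (L.weierstrassP z - x) + 12 * x) q :=
    (analyticAt_const.mul ha).add analyticAt_const
  have had := L.analyticOnNhd_derivWeierstrassP q hq
  have ho := haP.analyticOrderAt_deriv_add_one
  rw [L.deriv_weierstrassP, ← hx] at ho
  have he : (L.derivWeierstrassP ^ 2) =ᶠ[𝓝 q]
      (fun z => L.weierstrassP z - x) ^ 2 * (fun z => 4 * (L.weierstrassP z - x) + 12 * x) := by
    filter_upwards [(isOpen_compl_lattice L).mem_nhds hq] with z hz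
    have := L.derivWeierstrassP_sq z hz
    simp only [Pi.pow_apply, Pi.mul_apply]
    rw [this]
    linear_combination (L.weierstrassP z - x) * h2 - hc
  have ho2 := analyticOrderAt_congr he
  rw [analyticOrderAt_pow had, analyticOrderAt_mul (ha.pow 2) ha2, analyticOrderAt_pow ha,
    ← ho] at ho2
  have hne : analyticOrderAt L.derivWeierstrassP q ≠ ⊤ := by
    intro h
    rw [analyticOrderAt_eq_top] at h
    obtain ⟨z, hz, hz'⟩ := ((derivP_not_frequently L hq).and (nhdsWithin_le_nhds h)).exists
    exact hz hz'
  lift analyticOrderAt L.derivWeierstrassP q to ℕ using hne with n hn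
  generalize analyticOrderAt (fun z => 4 * (L.weierstrassP z - x) + 12 * x) q = m at ho2
  have : (2 • ((n : ℕ∞) + 1)) ≤ 2 • (n : ℕ∞) := by rw [ho2]; exact le_self_add
  rw [nsmul_eq_mul, nsmul_eq_mul] at this
  norm_cast at this
  omega

/-- Near its pole at `0`, `℘` is larger than `℘(c - z)`, so the denominator of `addF` is nonzero. -/
lemma eventually_addF (L : PeriodPair) {c : ℂ} (hc : c ∉ L.lattice) :
    ∀ᶠ z in 𝓝[≠] (0 : ℂ), z ∉ L.lattice ∧ c - z ∉ L.lattice ∧ L.weierstrassP z ≠ 0 ∧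
      L.weierstrassP z - L.weierstrassP (c - z) ≠ 0 := by
  have hct : Tendsto (fun z : ℂ => c - z) (𝓝[≠] 0) (𝓝 c) := by
    have : Tendsto (fun z : ℂ => c - z) (𝓝 0) (𝓝 (c - 0)) :=
      (continuous_const.sub continuous_id).tendsto 0
    rw [sub_zero] at this
    exact this.mono_left nhdsWithin_le_nhds
  have hQ : Tendsto (fun z => L.weierstrassP (c - z)) (𝓝[≠] 0) (𝓝 (L.weierstrassP c)) :=
    (L.analyticOnNhd_weierstrassP c hc).continuousAt.tendsto.comp hct
  have hP := (tendsto_norm_cobounded_atTop.comp (tendsto_P L)).eventually_gt_atTop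
    (‖L.weierstrassP c‖ + 1)
  filter_upwards [eventually_notMem L, hct.eventually ((isOpen_compl_lattice L).mem_nhds hc), hP,
    hQ.norm.eventually_lt_const (lt_add_one _)] with z h1 h2 h3 h4
  simp only [Function.comp] at h3
  refine ⟨h1, h2, fun h => ?_, fun h => ?_⟩
  · rw [h, norm_zero] at h3
    linarith [norm_nonneg (L.weierstrassP c)]
  · rw [sub_eq_zero.1 h] at h3
    linarith

/-- The right-hand side of the addition theorem for `℘(z + (c - z))`, as a function of `z`. -/
def addF (L : PeriodPair) (c z : ℂ) : ℂ :=
  (L.derivWeierstrassP z - L.derivWeierstrassP (c - z)) ^ 2 /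
    (4 * (L.weierstrassP z - L.weierstrassP (c - z)) ^ 2) -
      L.weierstrassP z - L.weierstrassP (c - z)

/-- `addF` is locally constant: this follows from `℘'² = 4℘³ - g₂℘ - g₃` and `℘'' = 6℘² - g₂/2`
at the points `z` and `c - z`. -/
lemma hasDerivAt_addF (L : PeriodPair) {c z : ℂ} (hz : z ∉ L.lattice) (hcz : c - z ∉ L.lattice)
    (hD : L.weierstrassP z - L.weierstrassP (c - z) ≠ 0) : HasDerivAt (addF L c) 0 z := by
  have hs : HasDerivAt (fun z : ℂ => c - z) (-1) z := (hasDerivAt_id' z).const_sub c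
  have hP := hasDerivAt_P L hz
  have hP' := hasDerivAt_derivP L hz
  have hQ := HasDerivAt.comp z (h₂ := L.weierstrassP) (h := fun z => c - z) (hasDerivAt_P L hcz) hs
  have hQ' := HasDerivAt.comp z (h₂ := L.derivWeierstrassP) (h := fun z => c - z)
    (hasDerivAt_derivP L hcz) hs
  simp only [Function.comp_def] at hQ hQ'
  have h := ((((hP'.fun_sub hQ').fun_pow 2).fun_div (((hP.fun_sub hQ).fun_pow 2).const_mul 4)
    (mul_ne_zero (by norm_num) (pow_ne_zero 2 hD))).fun_sub hP).fun_sub hQ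
  refine h.congr_deriv ?_
  have e1 := L.derivWeierstrassP_sq z hz
  have e2 := L.derivWeierstrassP_sq _ hcz
  generalize L.derivWeierstrassP z = a at *
  generalize L.derivWeierstrassP (c - z) = b at *
  generalize L.weierstrassP z = x at *
  generalize L.weierstrassP (c - z) = y at *
  have : (4 * (x - y) ^ 2) ^ 2 ≠ 0 := by simp [hD]
  push_cast
  field_simp
  linear_combination (-(2 : ℂ) * (a - b)) * (e1 - e2)

/-- The constant value of `addF` is found by letting `z → 0`: in the variables `1/℘(z) → 0` and
`℘'(z)/℘(z)² → 0` the expression becomes a continuous rational function. -/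
lemma tendsto_addF (L : PeriodPair) {c : ℂ} (hc : c ∉ L.lattice) :
    Tendsto (addF L c) (𝓝[≠] 0) (𝓝 (L.weierstrassP c)) := by
  have hct : Tendsto (fun z : ℂ => c - z) (𝓝[≠] 0) (𝓝 c) := by
    have : Tendsto (fun z : ℂ => c - z) (𝓝 0) (𝓝 (c - 0)) :=
      (continuous_const.sub continuous_id).tendsto 0
    rw [sub_zero] at this
    exact this.mono_left nhdsWithin_le_nhds
  have hQ : Tendsto (fun z => L.weierstrassP (c - z)) (𝓝[≠] 0) (𝓝 (L.weierstrassP c)) :=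
    (L.analyticOnNhd_weierstrassP c hc).continuousAt.tendsto.comp hct
  have hQ' : Tendsto (fun z => L.derivWeierstrassP (c - z)) (𝓝[≠] 0)
      (𝓝 (L.derivWeierstrassP c)) :=
    (L.analyticOnNhd_derivWeierstrassP c hc).continuousAt.tendsto.comp hct
  have hu : Tendsto (fun z => (L.weierstrassP z)⁻¹) (𝓝[≠] 0) (𝓝 0) :=
    tendsto_inv₀_cobounded.comp (tendsto_P L)
  have hev := eventually_addF L hc
  have hv2 : Tendsto (fun z => (L.derivWeierstrassP z * (L.weierstrassP z)⁻¹ ^ 2) ^ 2)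
      (𝓝[≠] 0) (𝓝 0) := by
    have h : Tendsto (fun z => 4 * (L.weierstrassP z)⁻¹ - L.g₂ * (L.weierstrassP z)⁻¹ ^ 3 -
        L.g₃ * (L.weierstrassP z)⁻¹ ^ 4) (𝓝[≠] 0) (𝓝 (4 * 0 - L.g₂ * 0 ^ 3 - L.g₃ * 0 ^ 4)) :=
      ((hu.const_mul 4).sub ((hu.pow 3).const_mul _)).sub ((hu.pow 4).const_mul _)
    simp only [mul_zero, ne_eq, OfNat.ofNat_ne_zero, not_false_eq_true, zero_pow, sub_zero] at h
    refine h.congr' ?_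
    filter_upwards [hev] with z ⟨hz, _, h0, _⟩
    rw [mul_pow, L.derivWeierstrassP_sq z hz]
    field_simp
  have hv : Tendsto (fun z => L.derivWeierstrassP z * (L.weierstrassP z)⁻¹ ^ 2)
      (𝓝[≠] 0) (𝓝 0) := by
    rw [tendsto_zero_iff_norm_tendsto_zero] at hv2 ⊢
    have := (Real.continuous_sqrt.tendsto 0).comp hv2
    rw [Real.sqrt_zero] at this
    refine this.congr fun z => ?_
    simp only [Function.comp_apply]
    rw [norm_pow, Real.sqrt_sq (norm_nonneg _)]
  have hnum := (((((hQ.add ((hQ.pow 2).mul hu)).sub (hu.const_mul (L.g₂ / 4))).sub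
    ((hQ.mul (hu.pow 2)).const_mul (L.g₂ / 4))).sub ((hu.pow 2).const_mul (L.g₃ / 2))).sub
    ((hv.mul hQ').const_mul (1 / 2)))
  have hden := ((hQ.mul hu).const_sub 1).pow 2
  have h := hnum.div hden (by simp)
  simp only [mul_zero, zero_mul, ne_eq, OfNat.ofNat_ne_zero, not_false_eq_true, zero_pow,
    sub_zero, add_zero, one_pow, div_one] at h
  refine h.congr' ?_
  filter_upwards [hev] with z ⟨hz, hcz, h0, hD⟩
  have e1 := L.derivWeierstrassP_sq z hz
  have e2 := L.derivWeierstrassP_sq _ hcz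
  simp only [addF, Pi.div_apply]
  generalize L.derivWeierstrassP z = a at *
  generalize L.derivWeierstrassP (c - z) = b at *
  generalize L.weierstrassP z = x at *
  generalize L.weierstrassP (c - z) = y at *
  have h3 : 1 - y * x⁻¹ = (x - y) / x := by field_simp
  rw [h3]
  field_simp
  linear_combination (-2 : ℂ) * (e1 + e2)

/-- The addition theorem for `℘`, in polynomial form. -/
lemma add_identity (L : PeriodPair) {z c : ℂ} (hz : z ∉ L.lattice) (hc : c ∉ L.lattice)
    (hcz : c - z ∉ L.lattice) :
    (L.derivWeierstrassP z - L.derivWeierstrassP (c - z)) ^ 2 -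
      4 * (L.weierstrassP z + L.weierstrassP (c - z) + L.weierstrassP c) *
        (L.weierstrassP z - L.weierstrassP (c - z)) ^ 2 = 0 := by
  set F := Function.update (addF L c) 0 (L.weierstrassP c) with hF
  have hev := eventually_addF L hc
  have hFe : ∀ z : ℂ, z ≠ 0 → F =ᶠ[𝓝 z] addF L c := fun z hz => by
    filter_upwards [isOpen_ne.mem_nhds hz] with y hy
    exact Function.update_of_ne hy _ _
  have hd : ∀ᶠ z in 𝓝[≠] (0 : ℂ), HasDerivAt F 0 z := by
    filter_upwards [hev, self_mem_nhdsWithin] with z ⟨h1, h2, _, h4⟩ h0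
    exact (hasDerivAt_addF L h1 h2 h4).congr_of_eventuallyEq (hFe z h0)
  have hcont : ContinuousAt F 0 := continuousAt_update_same.2 (tendsto_addF L hc)
  have han : AnalyticAt ℂ F 0 :=
    Complex.analyticAt_of_differentiable_on_punctured_nhds_of_continuousAt
      (hd.mono fun z h => h.differentiableAt) hcont
  have hd0 : ∀ᶠ z in 𝓝 (0 : ℂ), deriv F z = 0 :=
    han.deriv.frequently_zero_iff_eventually_zero.1 (hd.mono fun z h => h.deriv).frequently
  have hconst : ∀ᶠ z in 𝓝 (0 : ℂ), F z = L.weierstrassP c := by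
    obtain ⟨ε, hε, hball⟩ := Metric.eventually_nhds_iff_ball.1
      (hd0.and han.eventually_analyticAt)
    filter_upwards [Metric.ball_mem_nhds (0 : ℂ) hε] with z hz
    have := Metric.isOpen_ball.is_const_of_deriv_eq_zero
      (convex_ball (0 : ℂ) ε).isPreconnected
      (fun x hx => (hball x hx).2.differentiableAt.differentiableWithinAt)
      (fun x hx => (hball x hx).1) hz (Metric.mem_ball_self hε)
    rw [this, hF, Function.update_self]
  have hU : IsPreconnected ((L.lattice : Set ℂ) ∪ (fun l => c - l) '' (L.lattice : Set ℂ))ᶜ :=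
    isPreconnected_compl_countable ((countable_lattice L).union ((countable_lattice L).image _))
  set N : ℂ → ℂ := fun z => (L.derivWeierstrassP z - L.derivWeierstrassP (c - z)) ^ 2 -
      4 * (L.weierstrassP z + L.weierstrassP (c - z) + L.weierstrassP c) *
        (L.weierstrassP z - L.weierstrassP (c - z)) ^ 2 with hN
  have hmem : ∀ x, x ∉ L.lattice → c - x ∉ L.lattice →
      x ∈ ((L.lattice : Set ℂ) ∪ (fun l => c - l) '' (L.lattice : Set ℂ))ᶜ := by
    rintro x h1 h2 (h | ⟨l, hl, rfl⟩)
    · exact h1 h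
    · exact h2 (by simpa using hl)
  have hNan : AnalyticOnNhd ℂ N
      ((L.lattice : Set ℂ) ∪ (fun l => c - l) '' (L.lattice : Set ℂ))ᶜ := by
    intro x hx
    have h1 : x ∉ L.lattice := fun h => hx (Or.inl h)
    have h2 : c - x ∉ L.lattice := fun h => hx (Or.inr ⟨c - x, h, by ring⟩)
    have hs : AnalyticAt ℂ (fun z : ℂ => c - z) x := analyticAt_const.sub analyticAt_id
    have hP := L.analyticOnNhd_weierstrassP x h1
    have hP' := L.analyticOnNhd_derivWeierstrassP x h1
    have hQ := AnalyticAt.fun_comp (g := L.weierstrassP) (f := fun z => c - z)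
      (L.analyticOnNhd_weierstrassP _ h2) hs
    have hQ' := AnalyticAt.fun_comp (g := L.derivWeierstrassP) (f := fun z => c - z)
      (L.analyticOnNhd_derivWeierstrassP _ h2) hs
    exact ((hP'.sub hQ').pow 2).sub
      ((analyticAt_const.mul ((hP.add hQ).add analyticAt_const)).mul ((hP.sub hQ).pow 2))
  have hN0 : ∀ᶠ z in 𝓝[≠] (0 : ℂ), N z = 0 := by
    filter_upwards [hev, nhdsWithin_le_nhds hconst, self_mem_nhdsWithin] with z ⟨_, _, _, h4⟩ h5 h0
    rw [hF, Function.update_of_ne h0, addF] at h5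
    simp only [hN]
    field_simp at h5
    linear_combination h5
  obtain ⟨y, hy1, hy2, hy3⟩ :=
    ((eventually_eventually_nhdsWithin.2 hN0).and (hev.and self_mem_nhdsWithin)).exists
  rw [isOpen_compl_singleton.nhdsWithin_eq hy3] at hy1
  exact hNan.eqOn_zero_of_preconnected_of_eventuallyEq_zero hU (hmem y hy2.1 hy2.2.1) hy1
    (hmem z hz hcz)

/-- Rationality of the duplication formula: the tangent at `(x, y)` meets the curve again at
a point with coordinates in the same field. -/
lemma doubling_mem (K : IntermediateField ℚ ℂ) {a b x y X Y : ℂ} (ha : a ∈ K)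
    (hx : x ∈ K) (hy : y ∈ K) (e1 : y ^ 2 = 4 * x ^ 3 - a * x - b)
    (e2 : Y ^ 2 = 4 * X ^ 3 - a * X - b)
    (e3 : (Y + y) ^ 2 = 4 * (2 * x + X) * (X - x) ^ 2) (h0 : y = 0 → 12 * x ^ 2 ≠ a) :
    X ∈ K ∧ Y ∈ K := by
  have e4 : 2 * y * Y = (a - 12 * x ^ 2) * X + (b - y ^ 2 + 8 * x ^ 3) := by
    linear_combination e3 - e2
  have hn : ∀ n : ℕ, (n : ℂ) ∈ K := fun n => natCast_mem K n
  have h12 : (12 : ℂ) ∈ K := by exact_mod_cast hn 12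
  have h2 : (2 : ℂ) ∈ K := by exact_mod_cast hn 2
  have h4 : (4 : ℂ) ∈ K := by exact_mod_cast hn 4
  by_cases hy0 : y = 0
  · subst hy0
    have h5 : (a - 12 * x ^ 2) * (X - x) = 0 := by linear_combination -e4 - e1
    have h6 : a - 12 * x ^ 2 ≠ 0 := fun h => h0 rfl (sub_eq_zero.1 h).symm
    have h7 : X = x := sub_eq_zero.1 ((mul_eq_zero.1 h5).resolve_left h6)
    have h8 : Y ^ 2 = 0 := by rw [e2, h7, ← e1]; ring
    rw [h7, pow_eq_zero_iff (two_ne_zero) |>.1 h8]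
    exact ⟨hx, hy⟩
  · set s := (a - 12 * x ^ 2) / (2 * y) with hs
    have hsK : s ∈ K := div_mem (sub_mem ha (mul_mem h12 (pow_mem hx 2))) (mul_mem h2 hy)
    have hYy : Y + y = s * (X - x) := by
      rw [hs]; field_simp
      linear_combination e4 + e1
    have hX : X ∈ K := by
      rw [hYy] at e3
      have h5 : (X - x) ^ 2 * (X - (s ^ 2 / 4 - 2 * x)) = 0 := by linear_combination -e3 / 4
      rcases mul_eq_zero.1 h5 with h | h
      · rw [sub_eq_zero.1 (pow_eq_zero_iff (two_ne_zero) |>.1 h)]; exact hx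
      · rw [sub_eq_zero.1 h]
        exact sub_mem (div_mem (pow_mem hsK 2) h4) (mul_mem h2 hx)
    refine ⟨hX, ?_⟩
    rw [eq_sub_of_add_eq hYy]
    exact sub_mem (mul_mem hsK (sub_mem hX hx)) hy

lemma two_mul_mem (L : PeriodPair) (K : IntermediateField ℚ ℂ) (ha : L.g₂ ∈ K)
    {q : ℂ} (hq : q ∉ L.lattice) (hq2 : 2 * q ∉ L.lattice) (hx : L.weierstrassP q ∈ K)
    (hy : L.derivWeierstrassP q ∈ K) :
    L.weierstrassP (2 * q) ∈ K ∧ L.derivWeierstrassP (2 * q) ∈ K := by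
  have h := add_identity L hq2 hq (by
    rw [show q - 2 * q = -q by ring]; exact fun h => hq (neg_mem_iff.1 h))
  rw [show q - 2 * q = -q by ring, L.weierstrassP_neg, L.derivWeierstrassP_neg] at h
  refine doubling_mem K ha hx hy (L.derivWeierstrassP_sq q hq) (L.derivWeierstrassP_sq _ hq2)
    ?_ (not_both_zero L hq)
  linear_combination h

/-- The points at which `e^{αz}`, `℘`, `℘'` take values in `K`. -/
def goodSet (L : PeriodPair) (α : ℂ) (K : IntermediateField ℚ ℂ) : Set ℂ :=
  {w | w ∉ L.lattice ∧ Complex.exp (α * w) ∈ K ∧ L.weierstrassP w ∈ K ∧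
    L.derivWeierstrassP w ∈ K}

/-- One good point yields infinitely many: its multiples by powers of `2`, or, if one of them is
a period, its translates by multiples of that period. -/
lemma goodSet_infinite (L : PeriodPair) (α : ℂ) (K : IntermediateField ℚ ℂ) (ha : L.g₂ ∈ K)
    {p : ℂ} (hp : p ∈ goodSet L α K) : (goodSet L α K).Infinite := by
  obtain ⟨hp0, he, hx, hy⟩ := hp
  have hpne : p ≠ 0 := by rintro rfl; exact hp0 (zero_mem _)
  by_cases h : ∀ k : ℕ, 2 ^ k * p ∉ L.lattice
  · refine Set.infinite_of_injective_forall_mem (f := fun k : ℕ => 2 ^ k * p) ?_ ?_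
    · intro i j hij
      have h1 := mul_right_cancel₀ hpne hij
      exact Nat.pow_right_injective (le_refl 2) (by exact_mod_cast h1)
    · intro k
      refine ⟨h k, ?_, ?_⟩
      · have : Complex.exp (α * (2 ^ k * p)) = Complex.exp (α * p) ^ (2 ^ k) := by
          rw [← Complex.exp_nat_mul]; congr 1; push_cast; ring
        rw [this]; exact pow_mem he _
      · induction k with
        | zero => simpa using ⟨hx, hy⟩
        | succ k ih =>
          rw [pow_succ', mul_assoc]
          exact two_mul_mem L K ha (h k) (by rw [← mul_assoc, ← pow_succ']; exact h _)
            ih.1 ih.2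
  · push Not at h
    obtain ⟨k, hk⟩ := h
    refine Set.infinite_of_injective_forall_mem (f := fun j : ℕ => p + j * (2 ^ k * p)) ?_ ?_
    · intro i j hij
      have h1 := mul_right_cancel₀ (mul_ne_zero (pow_ne_zero k two_ne_zero) hpne) (add_left_cancel hij)
      exact_mod_cast h1
    · intro j
      have hj : (j : ℂ) * (2 ^ k * p) ∈ L.lattice := by
        rw [← nsmul_eq_mul]; exact nsmul_mem hk j
      refine ⟨fun h => hp0 (by simpa using sub_mem h hj), ?_, ?_, ?_⟩
      · have : Complex.exp (α * (p + j * (2 ^ k * p))) = Complex.exp (α * p) ^ (1 + j * 2 ^ k) := by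
          rw [← Complex.exp_nat_mul]; congr 1; push_cast; ring
        rw [this]; exact pow_mem he _
      · rw [L.weierstrassP_add_coe p ⟨_, hj⟩]; exact hx
      · rw [L.derivWeierstrassP_add_coe p ⟨_, hj⟩]; exact hy

end SchTwo

/-! ### Algebraic independence of `e^{αz}` and `℘` -/

namespace SchTwo

open Filter Topology

/-- Since `α ≠ 0` and the periods span `ℂ` over `ℝ`, they cannot all be mapped to the
imaginary axis by multiplication by `α`. -/
lemma exists_period (L : PeriodPair) {α : ℂ} (hα : α ≠ 0) :
    ∃ ω ∈ L.lattice, ‖Complex.exp (α * ω)‖ ≠ 1 := by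
  by_contra! h
  have h1 := h _ L.ω₁_mem_lattice
  have h2 := h _ L.ω₂_mem_lattice
  rw [Complex.norm_exp, Real.exp_eq_one_iff] at h1 h2
  have hi := LinearIndependent.pair_iff.1 L.indep
  have e1 : α * L.ω₁ = (α * L.ω₁).im * I := by
    conv_lhs => rw [← Complex.re_add_im (α * L.ω₁), h1]
    simp
  have e2 : α * L.ω₂ = (α * L.ω₂).im * I := by
    conv_lhs => rw [← Complex.re_add_im (α * L.ω₂), h2]
    simp
  obtain ⟨h3, -⟩ := hi (α * L.ω₂).im (-(α * L.ω₁).im) (by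
    simp only [Complex.real_smul]
    apply mul_left_cancel₀ hα
    push_cast
    linear_combination ((α * L.ω₂).im : ℂ) * e1 - ((α * L.ω₁).im : ℂ) * e2)
  rw [h3] at e2
  have h4 : L.ω₂ = 0 := by simpa [hα] using e2
  have := (hi 0 1 (by simp [h4])).2
  exact one_ne_zero this

/-- `e^{αz}` and `℘` are algebraically independent: no polynomial relation between them holds
near a point off the lattice. -/
lemma indep (L : PeriodPair) {α : ℂ} (hα : α ≠ 0) (r : ℕ) (b : ℕ → ℕ → ℂ) {w : ℂ}
    (hw : w ∉ L.lattice)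
    (h : ∀ᶠ z in 𝓝 w, ∑ i ∈ Finset.range r, ∑ j ∈ Finset.range r,
      b i j * Complex.exp (α * z) ^ i * L.weierstrassP z ^ j = 0) :
    ∀ i < r, ∀ j < r, b i j = 0 := by
  have han : AnalyticOnNhd ℂ (fun z => ∑ i ∈ Finset.range r, ∑ j ∈ Finset.range r,
      b i j * Complex.exp (α * z) ^ i * L.weierstrassP z ^ j) (L.lattice : Set ℂ)ᶜ := by
    intro z hz
    refine Finset.analyticAt_fun_sum _ fun i _ => Finset.analyticAt_fun_sum _ fun j _ => ?_
    exact (analyticAt_const.mul ((analyticAt_const.mul analyticAt_id).cexp.pow i)).mul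
      ((L.analyticOnNhd_weierstrassP z hz).pow j)
  have h0 := han.eqOn_zero_of_preconnected_of_eventuallyEq_zero
    (isPreconnected_compl_countable (countable_lattice L)) hw h
  obtain ⟨ω, hω, hω1⟩ := exists_period L hα
  have hexp : ∀ z ∉ L.lattice, ∀ i < r,
      ∑ j ∈ Finset.range r, b i j * L.weierstrassP z ^ j = 0 := by
    intro z hz i hi
    set p : Polynomial ℂ := ∑ i ∈ Finset.range r, Polynomial.monomial i
      (∑ j ∈ Finset.range r, b i j * L.weierstrassP z ^ j) with hp
    have hp0 : p = 0 := by
      refine Polynomial.eq_zero_of_infinite_isRoot p ?_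
      refine Set.infinite_of_injective_forall_mem
        (f := fun n : ℕ => Complex.exp (α * z) * Complex.exp (α * ω) ^ n) ?_ ?_
      · intro m n hmn
        have h1 := congrArg norm (mul_left_cancel₀ (Complex.exp_ne_zero _) hmn)
        rw [norm_pow, norm_pow] at h1
        exact pow_right_injective₀ (norm_pos_iff.2 (Complex.exp_ne_zero _)) hω1 h1
      · intro n
        have hn : (n : ℂ) * ω ∈ L.lattice := by
          rw [← nsmul_eq_mul]; exact nsmul_mem hω n
        have h2 := h0 (x := z + n * ω) fun h => hz (by simpa using sub_mem h hn)
        simp only [Pi.zero_apply] at h2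
        have h3 : Complex.exp (α * z) * Complex.exp (α * ω) ^ n =
            Complex.exp (α * (z + n * ω)) := by
          rw [← Complex.exp_nat_mul, ← Complex.exp_add]; congr 1; ring
        simp only [Set.mem_ofPred_eq, Polynomial.IsRoot.def, hp, Polynomial.eval_finsetSum,
          Polynomial.eval_monomial]
        rw [h3, ← h2]
        refine Finset.sum_congr rfl fun i _ => ?_
        rw [Finset.sum_mul]
        refine Finset.sum_congr rfl fun j _ => ?_
        rw [L.weierstrassP_add_coe z ⟨_, hn⟩]
        ring
    have h4 := congrArg (fun q => q.coeff i) hp0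
    simpa [hp, Polynomial.finsetSum_coeff, Polynomial.coeff_monomial, hi] using h4
  intro i hi j hj
  set q : Polynomial ℂ := ∑ j ∈ Finset.range r, Polynomial.monomial j (b i j) with hq
  have hq0 : q = 0 := by
    refine Polynomial.eq_zero_of_infinite_isRoot q fun hfin => ?_
    have h1 : ∀ᶠ z in 𝓝[≠] (0 : ℂ), L.weierstrassP z ∉ {x | q.IsRoot x} :=
      (tendsto_P L).eventually (Bornology.isBounded_def.1 hfin.isBounded)
    obtain ⟨z, hz, hz'⟩ := (h1.and (eventually_notMem L)).exists
    refine hz ?_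
    simp only [Set.mem_ofPred_eq, Polynomial.IsRoot.def, hq, Polynomial.eval_finsetSum,
      Polynomial.eval_monomial]
    exact hexp z hz' i hi
  have h4 := congrArg (fun q => q.coeff j) hq0
  simpa [hq, Polynomial.finsetSum_coeff, Polynomial.coeff_monomial, hj] using h4

end SchTwo

/-! ### The auxiliary function and its upper bound -/

namespace SchTwo

open Filter Topology

/-- Division by `(z - w) ^ s`, with the value at `w` filled in from the local factorization. -/
lemma factor_one {G : ℂ → ℂ} (hG : Differentiable ℂ G) {w : ℂ} {s : ℕ}
    (h : (s : ℕ∞) ≤ analyticOrderAt G w) :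
    ∃ H : ℂ → ℂ, Differentiable ℂ H ∧ ∀ z, G z = (z - w) ^ s * H z := by
  obtain ⟨g, hg, hgG⟩ := (natCast_le_analyticOrderAt (hG.analyticAt w)).1 h
  refine ⟨Function.update (fun z => G z / (z - w) ^ s) w (g w), fun z => ?_, fun z => ?_⟩
  · by_cases hz : z = w
    · subst hz
      refine hg.differentiableAt.congr_of_eventuallyEq ?_
      filter_upwards [hgG] with y hy
      by_cases hyz : y = z
      · subst hyz; simp
      · rw [Function.update_of_ne hyz, hy, smul_eq_mul,
          mul_div_cancel_left₀ _ (pow_ne_zero _ (sub_ne_zero.2 hyz))]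
    · have : DifferentiableAt ℂ (fun z => G z / (z - w) ^ s) z :=
        (hG z).fun_div ((differentiableAt_id.sub_const w).fun_pow s)
          (pow_ne_zero _ (sub_ne_zero.2 hz))
      refine this.congr_of_eventuallyEq ?_
      filter_upwards [isOpen_ne.mem_nhds hz] with y hy
      rw [Function.update_of_ne hy]
  · by_cases hz : z = w
    · subst hz
      rw [Function.update_self, hgG.self_of_nhds, smul_eq_mul]
    · rw [Function.update_of_ne hz, mul_div_cancel₀ _ (pow_ne_zero _ (sub_ne_zero.2 hz))]

/-- An entire function vanishing to order `s` on a finite set is divisible by the corresponding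
polynomial, with entire quotient. -/
lemma factor_many {G : ℂ → ℂ} (hG : Differentiable ℂ G) (W : Finset ℂ) {s : ℕ}
    (h : ∀ w ∈ W, (s : ℕ∞) ≤ analyticOrderAt G w) :
    ∃ H : ℂ → ℂ, Differentiable ℂ H ∧ ∀ z, G z = (∏ w ∈ W, (z - w) ^ s) * H z := by
  induction W using Finset.induction_on with
  | empty => exact ⟨G, hG, fun z => by simp⟩
  | insert a W ha ih =>
    obtain ⟨H, hH, hGH⟩ := ih fun w hw => h w (Finset.mem_insert_of_mem hw)
    have hp : Differentiable ℂ (fun z => ∏ w ∈ W, (z - w) ^ s) :=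
      Differentiable.fun_finsetProd fun w _ => (differentiable_id.sub_const w).fun_pow s
    have h1 := h a (Finset.mem_insert_self a W)
    have h0 : analyticOrderAt (fun z => ∏ w ∈ W, (z - w) ^ s) a = 0 := by
      rw [(hp.analyticAt a).analyticOrderAt_eq_zero, Finset.prod_ne_zero_iff]
      intro w hw
      exact pow_ne_zero _ (sub_ne_zero.2 fun h => ha (h ▸ hw))
    rw [show G = (fun z => ∏ w ∈ W, (z - w) ^ s) * H from funext hGH,
      analyticOrderAt_mul (hp.analyticAt a) (hH.analyticAt a), h0, zero_add] at h1
    obtain ⟨H', hH', hHH'⟩ := factor_one hH h1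
    refine ⟨H', hH', fun z => ?_⟩
    rw [hGH, hHH', Finset.prod_insert ha]
    ring

lemma iteratedDeriv_pow_mul {u : ℂ → ℂ} {w : ℂ} (hu : AnalyticAt ℂ u w) (s : ℕ) :
    iteratedDeriv s (fun z => (z - w) ^ s * u z) w = s.factorial * u w := by
  induction s generalizing u with
  | zero => simp
  | succ s ih =>
    have hev : deriv (fun z => (z - w) ^ (s + 1) * u z) =ᶠ[𝓝 w]
        fun z => (z - w) ^ s * ((s + 1) * u z + (z - w) * deriv u z) := by
      filter_upwards [hu.eventually_analyticAt] with z hz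
      have h := (((hasDerivAt_id' z).sub_const w).fun_pow (s + 1)).fun_mul
        hz.differentiableAt.hasDerivAt
      rw [h.deriv]
      push_cast
      ring
    rw [iteratedDeriv_succ', hev.iteratedDeriv_eq, ih]
    · rw [Nat.factorial_succ]; push_cast; ring
    · exact (analyticAt_const.mul hu).add ((analyticAt_id.sub analyticAt_const).mul hu.deriv)

/-- Schwarz lemma: the maximum principle applied to the quotient of `G` by a polynomial with
zeros in the disc of radius `R/2`. -/
lemma schwarz_bound {G H : ℂ → ℂ} (hH : Differentiable ℂ H) (W : Finset ℂ) {s : ℕ}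
    (h : ∀ z, G z = (∏ w ∈ W, (z - w) ^ s) * H z) {R S : ℝ} (hR : 0 < R)
    (hW : ∀ w ∈ W, ‖w‖ ≤ R / 2) (hS : ∀ z, ‖z‖ = R → ‖G z‖ ≤ S) {w : ℂ} (hw : ‖w‖ ≤ R) :
    ‖H w‖ * (R / 2) ^ (W.card * s) ≤ S := by
  have hpos : 0 < (R / 2) ^ (W.card * s) := by positivity
  rw [← le_div_iff₀ hpos]
  refine Complex.norm_le_of_forall_mem_frontier_norm_le (U := Metric.ball 0 R)
    Metric.isBounded_ball hH.diffContOnCl (fun z hz => ?_) ?_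
  · rw [frontier_ball _ hR.ne', mem_sphere_zero_iff_norm] at hz
    rw [le_div_iff₀ hpos]
    refine le_trans ?_ (hS z hz)
    rw [h z, norm_mul, mul_comm]
    gcongr
    rw [norm_prod, mul_comm, pow_mul, ← Finset.prod_const]
    refine Finset.prod_le_prod (fun _ _ => by positivity) fun w hw => ?_
    rw [norm_pow]
    gcongr
    have := norm_sub_norm_le z w
    linarith [hW w hw]
  · rw [closure_ball _ hR.ne']
    simpa using hw

/-- The auxiliary function: a polynomial in `e^{αz}` and `℘(z)`. -/
def auxF (L : PeriodPair) (α : ℂ) (r : ℕ) (b : ℕ → ℕ → ℂ) (z : ℂ) : ℂ :=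
  ∑ i ∈ Finset.range r, ∑ j ∈ Finset.range r,
    b i j * Complex.exp (α * z) ^ i * L.weierstrassP z ^ j

lemma analyticAt_auxF (L : PeriodPair) (α : ℂ) (r : ℕ) (b : ℕ → ℕ → ℂ) {z : ℂ}
    (hz : z ∉ L.lattice) : AnalyticAt ℂ (auxF L α r b) z := by
  refine Finset.analyticAt_fun_sum _ fun i _ => Finset.analyticAt_fun_sum _ fun j _ => ?_
  exact (analyticAt_const.mul ((analyticAt_const.mul analyticAt_id).cexp.pow i)).mul
    ((L.analyticOnNhd_weierstrassP z hz).pow j)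

/-- `auxF` with its poles cleared by the denominator `θ` of `℘ = h/θ`. -/
def auxG (α : ℂ) (θ h : ℂ → ℂ) (r : ℕ) (b : ℕ → ℕ → ℂ) (z : ℂ) : ℂ :=
  ∑ i ∈ Finset.range r, ∑ j ∈ Finset.range r,
    b i j * Complex.exp (α * z) ^ i * (h z ^ j * θ z ^ (r - j))

lemma auxG_eq (L : PeriodPair) {α : ℂ} {θ h : ℂ → ℂ} {z : ℂ}
    (hz : h z = θ z * L.weierstrassP z) (r : ℕ) (b : ℕ → ℕ → ℂ) :
    auxG α θ h r b z = θ z ^ r * auxF L α r b z := by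
  rw [auxG, auxF, Finset.mul_sum]
  refine Finset.sum_congr rfl fun i _ => ?_
  rw [Finset.mul_sum]
  refine Finset.sum_congr rfl fun j hj => ?_
  have : θ z ^ r = θ z ^ j * θ z ^ (r - j) := by
    rw [← pow_add, Nat.add_sub_cancel' (Finset.mem_range.1 hj).le]
  rw [hz, this, mul_pow]
  ring

lemma differentiable_auxG {α : ℂ} {θ h : ℂ → ℂ} (hθ : Differentiable ℂ θ)
    (hh : Differentiable ℂ h) (r : ℕ) (b : ℕ → ℕ → ℂ) : Differentiable ℂ (auxG α θ h r b) := by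
  refine Differentiable.fun_sum fun i _ => Differentiable.fun_sum fun j _ => ?_
  exact ((differentiable_const _).mul ((differentiable_id.const_mul α).cexp.fun_pow i)).mul
    ((hh.fun_pow j).mul (hθ.fun_pow _))

lemma norm_auxG_le {α : ℂ} {θ h : ℂ → ℂ} {r : ℕ} {b : ℕ → ℕ → ℂ} {β E : ℝ} (hβ : 0 ≤ β)
    (hb : ∀ i < r, ∀ j < r, ‖b i j‖ ≤ β) (hE : 1 ≤ E) {z : ℂ} (h1 : ‖Complex.exp (α * z)‖ ≤ E)
    (h2 : ‖θ z‖ ≤ E) (h3 : ‖h z‖ ≤ E) : ‖auxG α θ h r b z‖ ≤ (r : ℝ) ^ 2 * β * E ^ (2 * r) := by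
  have key : ∀ i ∈ Finset.range r, ∀ j ∈ Finset.range r,
      ‖b i j * Complex.exp (α * z) ^ i * (h z ^ j * θ z ^ (r - j))‖ ≤ β * E ^ (2 * r) := by
    intro i hi j hj
    rw [Finset.mem_range] at hi hj
    rw [norm_mul, norm_mul, norm_mul, norm_pow, norm_pow, norm_pow]
    calc _ ≤ β * E ^ i * (E ^ j * E ^ (r - j)) := by
          gcongr
          exact hb i hi j hj
      _ = β * E ^ (i + r) := by
          rw [← pow_add, Nat.add_sub_cancel' hj.le, mul_assoc, ← pow_add]
      _ ≤ β * E ^ (2 * r) := by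
          gcongr
          omega
  calc _ ≤ ∑ i ∈ Finset.range r, ∑ j ∈ Finset.range r, β * E ^ (2 * r) :=
        (norm_sum_le _ _).trans (Finset.sum_le_sum fun i hi =>
          (norm_sum_le _ _).trans (Finset.sum_le_sum fun j hj => key i hi j hj))
    _ = _ := by simp; ring

/-- Upper bound for the first non-vanishing derivative of the auxiliary function, at `6m` points
where it vanishes to order `s`.  The factor `s^{ms}` comes from the Schwarz lemma on a disc of
radius `s^{1/6}`. -/
lemma upper_bound (L : PeriodPair) (α : ℂ) (m : ℕ) (W : Finset ℂ)
    (hW : ∀ w ∈ W, w ∉ L.lattice) (hcard : W.card = 6 * m) :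
    ∃ B : ℝ, 1 ≤ B ∧ ∃ s₀ : ℕ, ∀ r s : ℕ, s₀ ≤ s → 1 ≤ s → r ≤ s → r ^ 2 ≤ 12 * m * s →
      ∀ (b : ℕ → ℕ → ℂ) (β : ℝ), 0 ≤ β → (∀ i < r, ∀ j < r, ‖b i j‖ ≤ β) →
      (∀ w ∈ W, ∀ k < s, iteratedDeriv k (auxF L α r b) w = 0) →
      ∀ w ∈ W, ‖iteratedDeriv s (auxF L α r b) w‖ * (s : ℝ) ^ (m * s) ≤ β * (B * s) ^ s := by
  obtain ⟨θ, h, hθ, hh, hden⟩ := exists_denominator L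
  obtain ⟨hθd, C₁, hC₁, hθC⟩ := hθ
  obtain ⟨hhd, C₂, hC₂, hhC⟩ := hh
  obtain ⟨-, C₃, hC₃, heC⟩ := growth_exp_mul α
  set C := C₁ + C₂ + C₃ with hC
  have hC0 : 0 ≤ C := by positivity
  set ρ : ℝ := 1 + ∑ w ∈ W, ‖w‖ with hρ
  have hρ1 : 1 ≤ ρ := le_add_of_nonneg_right (Finset.sum_nonneg fun _ _ => norm_nonneg _)
  have hρW : ∀ w ∈ W, ‖w‖ ≤ ρ := fun w hw => by
    have := Finset.single_le_sum (f := fun w => ‖w‖) (fun _ _ => norm_nonneg _) hw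
    linarith
  set Θ : ℝ := 1 + ∑ w ∈ W, ‖θ w‖⁻¹ with hΘ
  have hΘ1 : 1 ≤ Θ := le_add_of_nonneg_right
    (Finset.sum_nonneg fun _ _ => inv_nonneg.2 (norm_nonneg _))
  have hΘW : ∀ w ∈ W, ‖θ w‖⁻¹ ≤ Θ := fun w hw => by
    have := Finset.single_le_sum (f := fun w => ‖θ w‖⁻¹)
      (fun _ _ => inv_nonneg.2 (norm_nonneg _)) hw
    linarith
  refine ⟨(2 * ρ) ^ (6 * m) * Θ * 64 ^ m * (2 * (12 * m + 1)) * Real.exp (192 * C * m), ?_,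
    ⌈(2 * ρ) ^ 6⌉₊, ?_⟩
  · have e1 : 1 ≤ (2 * ρ) ^ (6 * m) := one_le_pow₀ (by linarith)
    have e2 : (1 : ℝ) ≤ 64 ^ m := one_le_pow₀ (by norm_num)
    have e3 : (1 : ℝ) ≤ 2 * (12 * m + 1) := by
      have : (0 : ℝ) ≤ m := Nat.cast_nonneg m
      linarith
    have e4 : 1 ≤ Real.exp (192 * C * m) := Real.one_le_exp (by positivity)
    have h1 := one_le_mul_of_one_le_of_one_le e1 hΘ1
    have h2 := one_le_mul_of_one_le_of_one_le h1 e2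
    have h3 := one_le_mul_of_one_le_of_one_le h2 e3
    exact one_le_mul_of_one_le_of_one_le h3 e4
  intro r s hs₀ hs1 hrs hr2 b β hβ hb hvan w hw
  have hsR : (1 : ℝ) ≤ s := by exact_mod_cast hs1
  -- With `R = s^{1/6}` and `r = O(s^{1/2})`, the growth factor `exp(O(r R³))` is only `exp(O(s))`,
  -- while the zeros gain `R^{6ms} = s^{ms}`.
  obtain ⟨R, hR0, hR6⟩ : ∃ R : ℝ, 0 ≤ R ∧ R ^ 6 = s :=
    ⟨(s : ℝ) ^ ((6 : ℕ) : ℝ)⁻¹, by positivity,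
      Real.rpow_inv_natCast_pow (by positivity) (by norm_num)⟩
  have hRρ : 2 * ρ ≤ R := by
    have h1 : (2 * ρ) ^ 6 ≤ R ^ 6 := by
      rw [hR6]; exact (Nat.le_ceil _).trans (by exact_mod_cast hs₀)
    exact le_of_pow_le_pow_left₀ (by norm_num) hR0 h1
  have hR1 : 1 ≤ R := by linarith
  set E := Real.exp (C * (1 + R) ^ 3) with hE
  have hE1 : 1 ≤ E := Real.one_le_exp (by positivity)
  have hGd := differentiable_auxG (α := α) hθd hhd r b
  have hord : ∀ w ∈ W, (s : ℕ∞) ≤ analyticOrderAt (auxG α θ h r b) w := by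
    intro w hw
    have hFa := analyticAt_auxF L α r b (hW w hw)
    have he : auxG α θ h r b =ᶠ[𝓝 w] (θ ^ r) * auxF L α r b := by
      filter_upwards [(isOpen_compl_lattice L).mem_nhds (hW w hw)] with z hz
      exact auxG_eq L (hden z hz).2 r b
    rw [analyticOrderAt_congr he, analyticOrderAt_mul ((hθd.analyticAt w).pow r) hFa]
    refine le_trans ?_ le_add_self
    exact (natCast_le_analyticOrderAt_iff_iteratedDeriv_eq_zero hFa).2 (hvan w hw)
  obtain ⟨H, hHd, hGH⟩ := factor_many hGd W hord
  have hHw : ‖H w‖ * (R / 2) ^ (W.card * s) ≤ (r : ℝ) ^ 2 * β * E ^ (2 * r) := by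
    refine schwarz_bound hHd W hGH (by linarith)
      (fun w hw => by linarith [hρW w hw]) (fun z hz => ?_) (by linarith [hρW w hw])
    refine norm_auxG_le hβ hb hE1 ((heC z).trans ?_) ((hθC z).trans ?_) ((hhC z).trans ?_)
    all_goals
      rw [hE, hz]
      gcongr
      rw [hC]
      linarith
  -- Near `w` the auxiliary function is `(z - w)^s` times a function analytic at `w`, whose value
  -- there gives the `s`-th derivative.
  have hder : iteratedDeriv s (auxF L α r b) w =
      s.factorial * ((∏ v ∈ W.erase w, (w - v) ^ s) * H w / θ w ^ r) := by
    have hu : AnalyticAt ℂ (fun z => (∏ v ∈ W.erase w, (z - v) ^ s) * H z / θ z ^ r) w := by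
      refine (AnalyticAt.mul ?_ (hHd.analyticAt w)).div ((hθd.analyticAt w).pow r)
        (pow_ne_zero _ (hden w (hW w hw)).1)
      refine Differentiable.analyticAt ?_ w
      exact Differentiable.fun_finsetProd fun v _ => (differentiable_id.sub_const v).fun_pow s
    rw [← iteratedDeriv_pow_mul hu s]
    refine Filter.EventuallyEq.iteratedDeriv_eq _ ?_
    filter_upwards [(isOpen_compl_lattice L).mem_nhds (hW w hw)] with z hz
    have h1 := auxG_eq L (α := α) (hden z hz).2 r b
    have h2 := pow_ne_zero r (hden z hz).1
    rw [hGH z, ← Finset.mul_prod_erase W _ hw] at h1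
    field_simp
    rw [mul_comm, ← h1]
  have hprod : ‖∏ v ∈ W.erase w, (w - v) ^ s‖ ≤ ((2 * ρ) ^ (6 * m)) ^ s := by
    rw [norm_prod]
    calc _ ≤ ∏ v ∈ W.erase w, (2 * ρ) ^ s := by
          refine Finset.prod_le_prod (fun _ _ => norm_nonneg _) fun v hv => ?_
          rw [norm_pow]
          gcongr
          have := norm_sub_le w v
          linarith [hρW w hw, hρW v (Finset.mem_of_mem_erase hv)]
      _ = (2 * ρ) ^ (s * (W.erase w).card) := by rw [Finset.prod_const, pow_mul]
      _ ≤ (2 * ρ) ^ (s * (6 * m)) := by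
          gcongr
          · linarith
          · rw [← hcard]; exact Finset.card_erase_le
      _ = _ := by rw [← pow_mul, mul_comm s]
  have hθw : (‖θ w‖ ^ r)⁻¹ ≤ Θ ^ s := by
    rw [← inv_pow]
    calc _ ≤ Θ ^ r := by gcongr; exact hΘW w hw
      _ ≤ _ := pow_le_pow_right₀ hΘ1 hrs
  have hfac : (s.factorial : ℝ) ≤ (s : ℝ) ^ s := by exact_mod_cast Nat.factorial_le_pow s
  have hRm : (R / 2) ^ (W.card * s) * (64 ^ m) ^ s = (s : ℝ) ^ (m * s) := by
    rw [hcard, ← hR6, ← pow_mul, ← pow_mul, div_pow, mul_assoc, pow_mul 2 6 (m * s)]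
    norm_num
  have hr2' : (r : ℝ) ^ 2 ≤ (2 * (12 * m + 1)) ^ s := by
    have h1 : (r : ℝ) ^ 2 ≤ 12 * m * s := by exact_mod_cast hr2
    have h2 : (s : ℝ) ≤ 2 ^ s := by exact_mod_cast (Nat.lt_two_pow_self (n := s)).le
    have h3 : (12 * m + 1 : ℝ) ≤ (12 * m + 1) ^ s :=
      le_self_pow₀ (by linarith [(Nat.cast_nonneg m : (0 : ℝ) ≤ m)]) (by omega)
    rw [mul_pow]
    calc (r : ℝ) ^ 2 ≤ s * (12 * m + 1) := by nlinarith
      _ ≤ _ := by gcongr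
  have hEr : E ^ (2 * r) ≤ Real.exp (192 * C * m) ^ s := by
    rw [hE, ← Real.exp_nat_mul, ← Real.exp_nat_mul, Real.exp_le_exp]
    have h1 : (1 + R) ^ 3 ≤ 8 * R ^ 3 := by
      calc (1 + R) ^ 3 ≤ (2 * R) ^ 3 := by gcongr; linarith
        _ = _ := by ring
    have h2 : (r : ℝ) * R ^ 3 ≤ (12 * m * s : ℝ) := by
      refine le_of_pow_le_pow_left₀ (two_ne_zero) (by positivity) ?_
      have h3 : (r : ℝ) ^ 2 ≤ (12 * m * s : ℝ) := by exact_mod_cast hr2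
      have h4 : (12 * m : ℝ) ≤ ((12 * m) ^ 2 : ℝ) := by
        have : 12 * m ≤ (12 * m) ^ 2 := Nat.le_self_pow two_ne_zero _
        exact_mod_cast this
      calc ((r : ℝ) * R ^ 3) ^ 2 = (r : ℝ) ^ 2 * R ^ 6 := by ring
        _ ≤ (12 * m * s : ℝ) * s := by rw [hR6]; gcongr
        _ = (12 * m : ℝ) * s ^ 2 := by ring
        _ ≤ ((12 * m) ^ 2 : ℝ) * s ^ 2 := by gcongr
        _ = _ := by ring
    push_cast
    calc 2 * (r : ℝ) * (C * (1 + R) ^ 3) ≤ 2 * (r : ℝ) * (C * (8 * R ^ 3)) := by gcongr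
      _ = 16 * C * ((r : ℝ) * R ^ 3) := by ring
      _ ≤ 16 * C * (12 * m * s : ℝ) := by gcongr
      _ = _ := by ring
  have hnorm : ‖iteratedDeriv s (auxF L α r b) w‖ =
      s.factorial * (‖∏ v ∈ W.erase w, (w - v) ^ s‖ * ‖H w‖ * (‖θ w‖ ^ r)⁻¹) := by
    rw [hder, norm_mul, norm_div, norm_mul, norm_pow, Complex.norm_natCast, div_eq_mul_inv]
  calc ‖iteratedDeriv s (auxF L α r b) w‖ * (s : ℝ) ^ (m * s)
      = s.factorial * (‖∏ v ∈ W.erase w, (w - v) ^ s‖ *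
          (‖H w‖ * (R / 2) ^ (W.card * s)) * (‖θ w‖ ^ r)⁻¹) * (64 ^ m) ^ s := by
        rw [hnorm, ← hRm]; ring
    _ ≤ (s : ℝ) ^ s * (((2 * ρ) ^ (6 * m)) ^ s *
          ((r : ℝ) ^ 2 * β * E ^ (2 * r)) * Θ ^ s) * (64 ^ m) ^ s := by gcongr
    _ ≤ (s : ℝ) ^ s * (((2 * ρ) ^ (6 * m)) ^ s *
          ((2 * (12 * m + 1)) ^ s * β * Real.exp (192 * C * m) ^ s) * Θ ^ s) * (64 ^ m) ^ s := by
        gcongr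
    _ = _ := by simp only [mul_pow]; ring

end SchTwo

/-! ### Arithmetic of the derivatives and Siegel's lemma -/

namespace SchTwo

open Filter Topology NumberField

/-- The value at a point of `d ^ (a + b + c + 2k)` times the `k`-th derivative of
`exp (α z) ^ a * ℘ ^ b * ℘' ^ c`, written as an integer polynomial in `d` and the multiples
`A = dα`, `G = d g₂/2`, `e = d exp (α z)`, `x = d ℘(z)`, `y = d ℘'(z)`. The recursion is Leibniz' rule with
`℘'' = 6℘² - g₂/2`; the truncated subtractions are harmless, as they come with a factor `b` or `c`. -/
def T {R : Type*} [CommRing R] (d A G e x y : R) : ℕ → ℕ → ℕ → ℕ → R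
  | 0, a, b, c => e ^ a * x ^ b * y ^ c
  | k + 1, a, b, c =>
    a * d * A * T d A G e x y k a b c + b * d ^ 2 * T d A G e x y k a (b - 1) (c + 1)
      + 6 * c * d * T d A G e x y k a (b + 2) (c - 1)
      - c * d ^ 2 * G * T d A G e x y k a b (c - 1)

lemma map_T {R S : Type*} [CommRing R] [CommRing S] (f : R →+* S) (d A G e x y : R)
    (k a b c : ℕ) :
    f (T d A G e x y k a b c) = T (f d) (f A) (f G) (f e) (f x) (f y) k a b c := by
  induction k generalizing a b c with
  | zero => simp [T]
  | succ k ih => simp only [T, map_add, map_sub, map_mul, map_pow, map_natCast, map_ofNat, ih]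

lemma T_eq_iteratedDeriv (L : PeriodPair) (α d : ℂ) {w : ℂ} (hw : w ∉ L.lattice)
    (k a b c : ℕ) :
    T d (d * α) (d * (L.g₂ / 2)) (d * Complex.exp (α * w)) (d * L.weierstrassP w)
        (d * L.derivWeierstrassP w) k a b c =
      d ^ (a + b + c + 2 * k) * iteratedDeriv k (fun z =>
        Complex.exp (α * z) ^ a * L.weierstrassP z ^ b * L.derivWeierstrassP z ^ c) w := by
  have hcd : ∀ a b c : ℕ, ContDiffAt ℂ k (fun z => Complex.exp (α * z) ^ a *
      L.weierstrassP z ^ b * L.derivWeierstrassP z ^ c) w := fun a b c =>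
    ((((analyticAt_const.mul analyticAt_id).cexp.pow a).mul
      ((L.analyticOnNhd_weierstrassP w hw).pow b)).mul
      ((L.analyticOnNhd_derivWeierstrassP w hw).pow c)).contDiffAt
  induction k generalizing a b c with
  | zero => simp only [T, iteratedDeriv_zero, mul_pow]; ring
  | succ k ih =>
    have hcd' : ∀ a b c : ℕ, ContDiffAt ℂ k (fun z => Complex.exp (α * z) ^ a *
      L.weierstrassP z ^ b * L.derivWeierstrassP z ^ c) w := fun a b c =>
        (hcd a b c).of_le (by exact_mod_cast Nat.le_succ k)
    have ih := fun a b c => ih a b c hcd'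
    have hev : deriv (fun z => Complex.exp (α * z) ^ a *
        L.weierstrassP z ^ b * L.derivWeierstrassP z ^ c) =ᶠ[𝓝 w] fun z =>
        ((a * α) * (Complex.exp (α * z) ^ a * L.weierstrassP z ^ b * L.derivWeierstrassP z ^ c)
        + b * (Complex.exp (α * z) ^ a * L.weierstrassP z ^ (b - 1) *
            L.derivWeierstrassP z ^ (c + 1)))
        + ((6 * c) * (Complex.exp (α * z) ^ a * L.weierstrassP z ^ (b + 2) *
            L.derivWeierstrassP z ^ (c - 1))
        + (-(c * (L.g₂ / 2))) * (Complex.exp (α * z) ^ a * L.weierstrassP z ^ b *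
            L.derivWeierstrassP z ^ (c - 1))) := by
      filter_upwards [(isOpen_compl_lattice L).mem_nhds hw] with z hz
      have h1 : HasDerivAt (fun z => Complex.exp (α * z)) (Complex.exp (α * z) * α) z := by
        simpa using ((hasDerivAt_id' z).const_mul α).cexp
      rw [(((h1.fun_pow a).fun_mul ((hasDerivAt_P L hz).fun_pow b)).fun_mul
        ((hasDerivAt_derivP L hz).fun_pow c)).deriv]
      have ha : (a : ℂ) * Complex.exp (α * z) ^ (a - 1) * Complex.exp (α * z) =
          a * Complex.exp (α * z) ^ a := by
        cases a with
        | zero => simp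
        | succ a => simp [pow_succ]; ring
      linear_combination (α * L.weierstrassP z ^ b * L.derivWeierstrassP z ^ c) * ha
    rw [iteratedDeriv_succ', hev.iteratedDeriv_eq, iteratedDeriv_fun_add, iteratedDeriv_fun_add,
      iteratedDeriv_fun_add]
    · simp only [iteratedDeriv_const_mul_field, T, ih]
      have hb : (b : ℂ) * d ^ 2 * d ^ (a + (b - 1) + (c + 1) + 2 * k) =
          b * d ^ (a + b + c + 2 * (k + 1)) := by
        cases b with
        | zero => simp
        | succ b => rw [Nat.add_sub_cancel]; ring
      have hc : (c : ℂ) * d * d ^ (a + (b + 2) + (c - 1) + 2 * k) =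
          c * d ^ (a + b + c + 2 * (k + 1)) := by
        cases c with
        | zero => simp
        | succ b => rw [Nat.add_sub_cancel]; ring
      have hc' : (c : ℂ) * d ^ 3 * d ^ (a + b + (c - 1) + 2 * k) =
          c * d ^ (a + b + c + 2 * (k + 1)) := by
        cases c with
        | zero => simp
        | succ b => rw [Nat.add_sub_cancel]; ring
      rw [mul_add, mul_add, mul_add]
      generalize iteratedDeriv k (fun z => Complex.exp (α * z) ^ a * L.weierstrassP z ^ b *
        L.derivWeierstrassP z ^ c) w = t₁
      generalize iteratedDeriv k (fun z => Complex.exp (α * z) ^ a * L.weierstrassP z ^ (b - 1) *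
        L.derivWeierstrassP z ^ (c + 1)) w = t₂
      generalize iteratedDeriv k (fun z => Complex.exp (α * z) ^ a * L.weierstrassP z ^ (b + 2) *
        L.derivWeierstrassP z ^ (c - 1)) w = t₃
      generalize iteratedDeriv k (fun z => Complex.exp (α * z) ^ a * L.weierstrassP z ^ b *
        L.derivWeierstrassP z ^ (c - 1)) w = t₄
      linear_combination t₂ * hb + 6 * t₃ * hc - (L.g₂ / 2) * t₄ * hc'
    all_goals first
      | exact contDiffAt_const.mul (hcd' _ _ _)
      | exact (contDiffAt_const.mul (hcd' _ _ _)).add (contDiffAt_const.mul (hcd' _ _ _))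

variable {K : Type*} [Field K] [NumberField K]

/-- Each differentiation costs a factor linear in the exponents, so `k` of them cost at most
`k ^ k` up to a geometric factor. -/
lemma house_T_le {d A G e x y : K} {H : ℝ} (hH : 1 ≤ H) (hd : house d ≤ H) (hA : house A ≤ H)
    (hG : house G ≤ H) (he : house e ≤ H) (hx : house x ≤ H) (hy : house y ≤ H)
    (k a b c : ℕ) :
    house (T d A G e x y k a b c) ≤
      H ^ (a + b + c + k) * (9 * H ^ 3 * ((a + b + c + k : ℕ) : ℝ)) ^ k := by
  have hmul : ∀ {u v : K} {U V : ℝ}, house u ≤ U → house v ≤ V → house (u * v) ≤ U * V :=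
    fun {u v U V} hu hv => (house_mul_le u v).trans
      (mul_le_mul hu hv (house_nonneg v) ((house_nonneg u).trans hu))
  have hpow : ∀ {u : K} {U : ℝ} (n : ℕ), house u ≤ U → house (u ^ n) ≤ U ^ n :=
    fun {u U} n hu => (house_pow_le u n).trans (pow_le_pow_left₀ (house_nonneg u) hu n)
  have hnat : ∀ (n : ℕ) {u : K} {U : ℝ}, house u ≤ U → house (n * u) ≤ n * U :=
    fun n {u U} hu => by rw [house_nat_mul]; gcongr
  have hH0 : 0 ≤ H := by linarith
  induction k generalizing a b c with
  | zero =>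
    simp only [T, pow_zero, mul_one, add_zero]
    rw [pow_add, pow_add]
    exact hmul (hmul (hpow a he) (hpow b hx)) (hpow c hy)
  | succ k ih =>
    set M := H ^ (a + b + c + (k + 1)) * (9 * H ^ 3 * ((a + b + c + (k + 1) : ℕ) : ℝ)) ^ k with hM
    have hM0 : 0 ≤ M := by positivity
    have ih' : ∀ a' b' c', a' + b' + c' ≤ a + b + c + 1 →
        house (T d A G e x y k a' b' c') ≤ M := by
      intro a' b' c' h
      refine (ih a' b' c').trans ?_
      have hle : a' + b' + c' + k ≤ a + b + c + (k + 1) := by omega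
      rw [hM]
      generalize a' + b' + c' + k = u at hle ⊢
      generalize a + b + c + (k + 1) = v at hle ⊢
      gcongr
    have h1 : house (a * (d * (A * T d A G e x y k a b c))) ≤ a * (H * (H * M)) :=
      hnat a (hmul hd (hmul hA (ih' _ _ _ (by omega))))
    have h2 : house (b * (d ^ 2 * T d A G e x y k a (b - 1) (c + 1))) ≤ b * (H ^ 2 * M) :=
      hnat b (hmul (hpow 2 hd) (ih' _ _ _ (by omega)))
    have h3 : house (((6 * c : ℕ) : K) * (d * T d A G e x y k a (b + 2) (c - 1))) ≤
        ((6 * c : ℕ) : ℝ) * (H * M) := by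
      cases c with
      | zero => simpa using hnat (6 * 0) (u := 0) (U := 0) (by simp [house])
      | succ c => exact hnat _ (hmul hd (ih' _ _ _ (by omega)))
    have h4 : house (c * (d ^ 2 * (G * T d A G e x y k a b (c - 1)))) ≤
        c * (H ^ 2 * (H * M)) :=
      hnat c (hmul (hpow 2 hd) (hmul hG (ih' _ _ _ (by omega))))
    have hsub : ∀ u v : K, house (u - v) ≤ house u + house v := fun u v => by
      simp only [house, map_sub]; exact norm_sub_le _ _
    have hT : T d A G e x y (k + 1) a b c =
        a * (d * (A * T d A G e x y k a b c)) + b * (d ^ 2 * T d A G e x y k a (b - 1) (c + 1))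
        + ((6 * c : ℕ) : K) * (d * T d A G e x y k a (b + 2) (c - 1))
        - c * (d ^ 2 * (G * T d A G e x y k a b (c - 1))) := by
      rw [T]; push_cast; ring
    rw [hT]
    have hHle : H ≤ H ^ 3 := le_self_pow₀ hH (by norm_num)
    have hHle2 : H ^ 2 ≤ H ^ 3 := pow_le_pow_right₀ hH (by norm_num)
    calc _ ≤ a * (H * (H * M)) + b * (H ^ 2 * M) + ((6 * c : ℕ) : ℝ) * (H * M)
          + c * (H ^ 2 * (H * M)) := by
          refine (hsub _ _).trans (add_le_add ((house_add_le _ _).trans (add_le_add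
            ((house_add_le _ _).trans (add_le_add h1 h2)) h3)) h4)
      _ = (a * H ^ 2 + b * H ^ 2 + 6 * c * H + c * H ^ 3) * M := by push_cast; ring
      _ ≤ (a * H ^ 3 + b * H ^ 3 + 6 * c * H ^ 3 + c * H ^ 3) * M := by gcongr
      _ ≤ (9 * H ^ 3 * ((a + b + c + (k + 1) : ℕ) : ℝ)) * M := by
          gcongr
          push_cast
          have : 0 ≤ H ^ 3 * (8 * a + 8 * b + 2 * c + 9 * (k + 1) : ℝ) := by positivity
          linarith
      _ = _ := by rw [hM, pow_succ _ k]; ring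

/-- Siegel's lemma over a number field, for twice as many unknowns as equations; the zero matrix,
excluded in Mathlib's version, is allowed. -/
lemma siegel (K : Type*) [Field K] [NumberField K] : ∃ C : ℝ, 1 ≤ C ∧
    ∀ (ι κ : Type) [Fintype ι] [Fintype κ] (p : ℕ), 0 < p → Fintype.card ι = p →
      Fintype.card κ = 2 * p → ∀ (a : Matrix ι κ (𝓞 K)) (A : ℝ), 1 ≤ A →
      (∀ k l, house ((a k l : 𝓞 K) : K) ≤ A) →
      ∃ ξ : κ → 𝓞 K, ξ ≠ 0 ∧ a.mulVec ξ = 0 ∧ ∀ l, house ((ξ l : 𝓞 K) : K) ≤ C * (p * A) := by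
  classical
  obtain ⟨C, hC⟩ : ∃ C : ℝ, ∀ (ι κ : Type) [Fintype ι] [Fintype κ] (p : ℕ), 0 < p →
      Fintype.card ι = p → Fintype.card κ = 2 * p → ∀ (a : Matrix ι κ (𝓞 K)) (A : ℝ), a ≠ 0 →
      (∀ k l, house ((a k l : 𝓞 K) : K) ≤ A) →
      ∃ ξ : κ → 𝓞 K, ξ ≠ 0 ∧ a.mulVec ξ = 0 ∧ ∀ l, house ((ξ l : 𝓞 K) : K) ≤
        C * ((C * ((2 * p : ℕ) : ℝ) * A) ^ ((p : ℝ) / (((2 * p : ℕ) : ℝ) - p))) :=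
    ⟨_, fun ι κ _ _ p hp h1 h2 a A ha hA =>
      NumberField.house.exists_ne_zero_int_vec_house_le K a ha hp (by omega) h2 hA h1⟩
  refine ⟨2 * C ^ 2 + 1, by nlinarith, fun ι κ _ _ p hp h1 h2 a A hA1 hA => ?_⟩
  have hp1 : (1 : ℝ) ≤ p := by exact_mod_cast hp
  by_cases ha : a = 0
  · refine ⟨fun _ => 1, fun h => ?_, ?_, fun l => ?_⟩
    · have : 0 < Fintype.card κ := by omega
      obtain ⟨l⟩ := Fintype.card_pos_iff.1 this
      exact one_ne_zero (congrFun h l)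
    · rw [ha, Matrix.zero_mulVec]
    · have : house (((1 : 𝓞 K)) : K) = 1 := by simpa using house_intCast (K := K) 1
      rw [this]
      exact one_le_mul_of_one_le_of_one_le (by nlinarith) (one_le_mul_of_one_le_of_one_le hp1 hA1)
  · obtain ⟨ξ, h0, hm, hb⟩ := hC ι κ p hp h1 h2 a A ha hA
    refine ⟨ξ, h0, hm, fun l => (hb l).trans ?_⟩
    have : (p : ℝ) / (((2 * p : ℕ) : ℝ) - p) = 1 := by
      rw [div_eq_one_iff_eq] <;> push_cast <;> linarith
    rw [this, Real.rpow_one]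
    push_cast
    have : 0 ≤ (p : ℝ) * A := by positivity
    linarith

end SchTwo

/-! ### Liouville's inequality and the contradiction -/

namespace SchTwo

open Filter Topology NumberField

/-- The scaled derivatives of the auxiliary function are values of an explicit polynomial. -/
lemma iteratedDeriv_auxF (L : PeriodPair) (α δ : ℂ) (r : ℕ) (ξ : ℕ → ℕ → ℂ) {w : ℂ}
    (hw : w ∉ L.lattice) (k : ℕ) :
    δ ^ (2 * k) * iteratedDeriv k (auxF L α r fun i j => ξ i j * δ ^ (i + j)) w =
      ∑ i ∈ Finset.range r, ∑ j ∈ Finset.range r, ξ i j *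
        T δ (δ * α) (δ * (L.g₂ / 2)) (δ * Complex.exp (α * w)) (δ * L.weierstrassP w)
          (δ * L.derivWeierstrassP w) k i j 0 := by
  have hF : auxF L α r (fun i j => ξ i j * δ ^ (i + j)) = fun z =>
      ∑ i ∈ Finset.range r, ∑ j ∈ Finset.range r, (ξ i j * δ ^ (i + j)) *
        (Complex.exp (α * z) ^ i * L.weierstrassP z ^ j * L.derivWeierstrassP z ^ 0) := by
    funext z
    simp only [auxF, pow_zero, mul_one, mul_assoc]
  have hcd : ∀ i j : ℕ, ContDiffAt ℂ k (fun z => (ξ i j * δ ^ (i + j)) *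
      (Complex.exp (α * z) ^ i * L.weierstrassP z ^ j * L.derivWeierstrassP z ^ 0)) w :=
    fun i j => (analyticAt_const.mul ((((analyticAt_const.mul analyticAt_id).cexp.pow i).mul
      ((L.analyticOnNhd_weierstrassP w hw).pow j)).mul
      ((L.analyticOnNhd_derivWeierstrassP w hw).pow 0))).contDiffAt
  rw [hF, iteratedDeriv_fun_sum fun i _ => ContDiffAt.sum fun j _ => hcd i j, Finset.mul_sum]
  refine Finset.sum_congr rfl fun i _ => ?_
  rw [iteratedDeriv_fun_sum fun j _ => hcd i j, Finset.mul_sum]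
  refine Finset.sum_congr rfl fun j _ => ?_
  rw [iteratedDeriv_const_mul_field, T_eq_iteratedDeriv L α δ hw]
  ring

variable {K : Type*} [Field K] [NumberField K]

/-- Liouville's inequality for algebraic integers. -/
lemma one_le_norm_mul_house_pow (σ : K →+* ℂ) {γ : 𝓞 K} (h : γ ≠ 0) :
    1 ≤ ‖σ (γ : K)‖ * house (γ : K) ^ (Module.finrank ℚ K - 1) := by
  refine le_trans ?_ (norm_norm_le_norm_mul_house_pow (γ : K) σ)
  rw [← Algebra.coe_norm_int]
  have h1 : Algebra.norm ℤ γ ≠ 0 := Algebra.norm_ne_zero_iff.2 h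
  rw [← Rat.norm_cast_real]
  simpa using (by exact_mod_cast Int.one_le_abs h1 : (1 : ℝ) ≤ |((Algebra.norm ℤ γ : ℤ) : ℝ)|)

/-- The form in which `house_T_le` is applied. -/
lemma house_T_le' {d A G e x y : K} {H : ℝ} (hH : 1 ≤ H) (hd : house d ≤ H) (hA : house A ≤ H)
    (hG : house G ≤ H) (he : house e ≤ H) (hx : house x ≤ H) (hy : house y ≤ H)
    {N k i j : ℕ} (hN : 1 ≤ N) (hk : k ≤ N) (hi : i ≤ N) (hj : j ≤ N) :
    house (T d A G e x y k i j 0) ≤ (27 * H ^ 6 * N) ^ N := by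
  refine (house_T_le hH hd hA hG he hx hy k i j 0).trans ?_
  have hN1 : (1 : ℝ) ≤ N := by exact_mod_cast hN
  have hle : i + j + 0 + k ≤ 3 * N := by omega
  have h3 : ((i + j + 0 + k : ℕ) : ℝ) ≤ 3 * N := by exact_mod_cast hle
  have h4 : (1 : ℝ) ≤ 9 * H ^ 3 * (3 * N) :=
    one_le_mul_of_one_le_of_one_le
      (one_le_mul_of_one_le_of_one_le (by norm_num) (one_le_pow₀ hH)) (by linarith)
  calc _ ≤ H ^ (3 * N) * (9 * H ^ 3 * (3 * N)) ^ k := by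
        gcongr
    _ ≤ H ^ (3 * N) * (9 * H ^ 3 * (3 * N)) ^ N := by gcongr
    _ = _ := by rw [pow_mul, ← mul_pow]; ring

set_option maxHeartbeats 1000000 in
/-- The contradiction from `6(2D + 1)` points, `D = [K : ℚ]`, at which `e^{αz}`, `℘`, `℘'` take
values in `K`. Here `δ` is a common denominator. If `s` is the first order at which some derivative
of the auxiliary function is nonzero, that derivative (scaled to an algebraic integer) has house at
most `(B s²)^s` and absolute value at most `(B s²)^s / s^{(2D + 1)s}`, whereas the norm of a nonzero
algebraic integer is at least one; hence `s ≤ B^D`, although `s` may be taken arbitrarily large. -/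
lemma core (L : PeriodPair) {α : ℂ} (hα : α ≠ 0) (φ : K →+* ℂ) (W : Finset ℂ)
    (hW : ∀ w ∈ W, w ∉ L.lattice) (hcard : W.card = 6 * (2 * Module.finrank ℚ K + 1))
    {δ : ℤ} (hδ : δ ≠ 0) (A G : 𝓞 K) (e x y : ℂ → 𝓞 K) (hA : φ A = δ * α)
    (hG : φ G = δ * (L.g₂ / 2)) (he : ∀ w ∈ W, φ (e w) = δ * Complex.exp (α * w))
    (hx : ∀ w ∈ W, φ (x w) = δ * L.weierstrassP w)
    (hy : ∀ w ∈ W, φ (y w) = δ * L.derivWeierstrassP w) : False := by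
  classical
  set D := Module.finrank ℚ K with hD
  set m := 2 * D + 1 with hm
  have hDpos : 0 < D := Module.finrank_pos
  -- `H` bounds the houses of all the algebraic integers given.
  set H : ℝ := 1 + house ((δ : 𝓞 K) : K) + house (A : K) + house (G : K) +
    ∑ w ∈ W, (house (e w : K) + house (x w : K) + house (y w : K)) with hH
  have hn := fun u : K => house_nonneg u
  have hs0 : ∀ w ∈ W, 0 ≤ house (e w : K) + house (x w : K) + house (y w : K) := fun w _ => by
    have := hn (e w); have := hn (x w); have := hn (y w); positivity
  have hsum0 := Finset.sum_nonneg hs0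
  have hH1 : 1 ≤ H := by
    linarith [hn (δ : 𝓞 K), hn A, hn G]
  have hHd : house ((δ : 𝓞 K) : K) ≤ H := by linarith [hn (δ : 𝓞 K), hn A, hn G]
  have hHA : house (A : K) ≤ H := by linarith [hn (δ : 𝓞 K), hn A, hn G]
  have hHG : house (G : K) ≤ H := by linarith [hn (δ : 𝓞 K), hn A, hn G]
  have hHw : ∀ w ∈ W, house (e w : K) + house (x w : K) + house (y w : K) ≤ H := fun w hw => by
    have := Finset.single_le_sum hs0 hw
    linarith [hn (δ : 𝓞 K), hn A, hn G]
  have hHe : ∀ w ∈ W, house (e w : K) ≤ H := fun w hw => by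
    linarith [hHw w hw, hn (e w), hn (x w), hn (y w)]
  have hHx : ∀ w ∈ W, house (x w : K) ≤ H := fun w hw => by
    linarith [hHw w hw, hn (e w), hn (x w), hn (y w)]
  have hHy : ∀ w ∈ W, house (y w : K) ≤ H := fun w hw => by
    linarith [hHw w hw, hn (e w), hn (x w), hn (y w)]
  clear_value H D m
  set τ : ℂ → ℕ → ℕ → ℕ → 𝓞 K := fun w k i j => T (δ : 𝓞 K) A G (e w) (x w) (y w) k i j 0 with hτ
  have hτH : ∀ w ∈ W, ∀ N k i j : ℕ, 1 ≤ N → k ≤ N → i ≤ N → j ≤ N →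
      house (τ w k i j : K) ≤ (27 * H ^ 6 * N) ^ N := fun w hw N k i j h1 h2 h3 h4 => by
    have := house_T_le' hH1 hHd hHA hHG (hHe w hw) (hHx w hw) (hHy w hw) h1 h2 h3 h4
    rwa [← map_T (algebraMap (𝓞 K) K)] at this
  have hτφ : ∀ w ∈ W, ∀ k i j, φ (τ w k i j) = T (δ : ℂ) (δ * α) (δ * (L.g₂ / 2))
      (δ * Complex.exp (α * w)) (δ * L.weierstrassP w) (δ * L.derivWeierstrassP w) k i j 0 := by
    intro w hw k i j
    have := map_T (φ.comp (algebraMap (𝓞 K) K)) (δ : 𝓞 K) A G (e w) (x w) (y w) k i j 0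
    simp only [RingHom.comp_apply, hA, hG, he w hw, hx w hw, hy w hw, map_intCast] at this
    exact this
  obtain ⟨C, hC1, hsiegel⟩ := siegel K
  obtain ⟨B, hB1, s₀, hupper⟩ := upper_bound L α m W hW hcard
  obtain ⟨M, hM⟩ : ∃ M, M = 6 * m := ⟨_, rfl⟩
  have hMpos : 1 ≤ M := by omega
  have hM1 : (1 : ℝ) ≤ M := by exact_mod_cast hMpos
  have hH6 : 1 ≤ 27 * H ^ 6 := one_le_mul_of_one_le_of_one_le (by norm_num) (one_le_pow₀ hH1)
  have hCM : 1 ≤ C * M := one_le_mul_of_one_le_of_one_le hC1 hM1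
  set B₂ : ℝ := C * M * 2 * (27 * H ^ 6) with hB₂
  have hB₂1 : 1 ≤ B₂ := one_le_mul_of_one_le_of_one_le
    (one_le_mul_of_one_le_of_one_le hCM (by norm_num)) hH6
  have hδ1 : (1 : ℝ) ≤ |(δ : ℝ)| := by exact_mod_cast Int.one_le_abs hδ
  set B₄ : ℝ := B₂ * B * (|(δ : ℝ)| ^ 2 * |(δ : ℝ)| ^ 2) * (4 * (27 * H ^ 6)) with hB₄
  have hd2 : 1 ≤ |(δ : ℝ)| ^ 2 := one_le_pow₀ hδ1
  have hd4 := one_le_mul_of_one_le_of_one_le hd2 hd2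
  have h427 : 1 ≤ 4 * (27 * H ^ 6) := by linarith
  have hBB := one_le_mul_of_one_le_of_one_le hB₂1 hB1
  -- There are `r² = 2 n M` unknown coefficients, and `n M` equations: `n` derivatives at each of the
  -- `M = 6m` points. The parameter `t` makes `r²` exactly this multiple and forces `s` to be large.
  obtain ⟨t₁, ht₁⟩ := exists_nat_gt (B₄ ^ D)
  set t := t₁ + s₀ + 1 with ht
  set r := 2 * M * t with hr
  set n := 2 * M * t ^ 2 with hnn
  clear_value B₂ B₄ t r n
  have htn : t ≤ n := by rw [hnn]; nlinarith
  have hrn : r ≤ n := by rw [hr, hnn]; nlinarith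
  have hn1 : 1 ≤ n := by omega
  have hn1R : (1 : ℝ) ≤ n := by exact_mod_cast hn1
  have hAn : (1 : ℝ) ≤ (27 * H ^ 6 * n) ^ n :=
    one_le_pow₀ (one_le_mul_of_one_le_of_one_le hH6 hn1R)
  obtain ⟨ξ, hξ0, hξ, hξH⟩ := hsiegel (Fin n × W) (Fin r × Fin r) (n * M)
    (Nat.mul_pos hn1 hMpos) (by rw [Fintype.card_prod, Fintype.card_fin, Fintype.card_coe, hcard, hM])
    (by rw [Fintype.card_prod, Fintype.card_fin, hr, hnn]; ring)
    (fun q ij => τ q.2 q.1 ij.1 ij.2) ((27 * H ^ 6 * n) ^ n) hAn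
    (fun q ij => hτH q.2 q.2.2 n _ _ _ hn1 q.1.2.le (ij.1.2.le.trans hrn) (ij.2.2.le.trans hrn))
  have hξB : ∀ l, house (ξ l : K) ≤ (B₂ * n) ^ n := fun l => by
    refine (hξH l).trans ?_
    have h2 : (n : ℝ) ≤ 2 ^ n := by exact_mod_cast (Nat.lt_two_pow_self (n := n)).le
    have h3 : C * M ≤ (C * M) ^ n := le_self_pow₀ hCM (by omega)
    push_cast
    calc C * (n * M * (27 * H ^ 6 * n) ^ n) = (C * M) * n * (27 * H ^ 6 * n) ^ n := by ring
      _ ≤ (C * M) ^ n * 2 ^ n * (27 * H ^ 6 * n) ^ n := by gcongr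
      _ = _ := by rw [← mul_pow, ← mul_pow, hB₂]; ring
  set ξ' : ℕ → ℕ → 𝓞 K := fun i j => if h : i < r ∧ j < r then ξ (⟨i, h.1⟩, ⟨j, h.2⟩) else 0
    with hξ'
  have hξ'f : ∀ i j : Fin r, ξ' i j = ξ (i, j) := fun i j => by simp [hξ']
  have hξ'B : ∀ i < r, ∀ j < r, house (ξ' i j : K) ≤ (B₂ * n) ^ n := fun i hi j hj => by
    have := hξ'f ⟨i, hi⟩ ⟨j, hj⟩
    simp only at this
    rw [this]
    exact hξB _
  set γ : ℂ → ℕ → 𝓞 K := fun w k =>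
    ∑ i ∈ Finset.range r, ∑ j ∈ Finset.range r, ξ' i j * τ w k i j with hγ
  have hδC : (δ : ℂ) ≠ 0 := by exact_mod_cast hδ
  set F := auxF L α r (fun i j => φ (ξ' i j) * (δ : ℂ) ^ (i + j)) with hF
  have hFγ : ∀ w ∈ W, ∀ k, (δ : ℂ) ^ (2 * k) * iteratedDeriv k F w = φ (γ w k) := by
    intro w hw k
    rw [hF, iteratedDeriv_auxF L α δ r (fun i j => φ (ξ' i j)) (hW w hw)]
    simp only [hγ, map_sum, map_mul, hτφ w hw]
  have hγ0 : ∀ w ∈ W, ∀ k < n, γ w k = 0 := by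
    intro w hw k hk
    have := congrFun hξ (⟨k, hk⟩, ⟨w, hw⟩)
    simp only [Matrix.mulVec, dotProduct, Fintype.sum_prod_type, Pi.zero_apply] at this
    rw [← this, hγ]
    simp only [Finset.sum_range, hξ'f]
    exact Finset.sum_congr rfl fun i _ => Finset.sum_congr rfl fun j _ => mul_comm _ _
  -- By algebraic independence of `e^{αz}` and `℘`, not all derivatives can vanish.
  have hex : ∃ s, ∃ w ∈ W, γ w s ≠ 0 := by
    by_contra hcon
    push Not at hcon
    have hne : W.Nonempty := Finset.card_pos.1 (by omega)
    obtain ⟨w, hw⟩ := hne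
    have htop : analyticOrderAt F w = ⊤ := by
      rw [ENat.eq_top_iff_forall_ge]
      intro k
      rw [natCast_le_analyticOrderAt_iff_iteratedDeriv_eq_zero (analyticAt_auxF L α r _ (hW w hw))]
      intro i _
      have := hFγ w hw i
      rw [hcon i w hw] at this
      simpa [hδC] using this
    have h0 := indep L hα r _ (hW w hw) (analyticOrderAt_eq_top.1 htop)
    refine hξ0 (funext fun ⟨i, j⟩ => ?_)
    have h1 := h0 i i.2 j j.2
    rw [mul_eq_zero, or_iff_left (pow_ne_zero _ hδC), map_eq_zero, hξ'f] at h1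
    simpa using h1
  obtain ⟨w, hw, hγw⟩ := Nat.find_spec hex
  set s := Nat.find hex with hs
  have hmin : ∀ w ∈ W, ∀ k < s, γ w k = 0 := fun w hw k hk => by
    have := Nat.find_min hex hk
    push Not at this
    exact this w hw
  have hns : n ≤ s := by
    by_contra hlt
    exact hγw (hγ0 w hw s (not_le.1 hlt))
  have hrs : r ≤ s := hrn.trans hns
  have hs1 : 1 ≤ s := hn1.trans hns
  have hs1R : (1 : ℝ) ≤ s := by exact_mod_cast hs1
  have hBs : (B₂ * n) ^ n ≤ (B₂ * s) ^ s := by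
    calc (B₂ * n) ^ n ≤ (B₂ * s) ^ n := by gcongr
      _ ≤ _ := pow_le_pow_right₀ (one_le_mul_of_one_le_of_one_le hB₂1 hs1R) hns
  have hU := hupper r s (by omega) hs1 hrs (by rw [hr]; nlinarith)
    (fun i j => φ (ξ' i j) * (δ : ℂ) ^ (i + j)) ((B₂ * s) ^ s * |(δ : ℝ)| ^ (2 * s))
    (by positivity)
    (fun i hi j hj => by
      rw [norm_mul, norm_pow, Complex.norm_intCast]
      gcongr
      · exact (norm_embedding_le_house _ φ).trans ((hξ'B i hi j hj).trans hBs)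
      · omega)
    (fun w hw k hk => by
      have := hFγ w hw k
      rw [hmin w hw k hk] at this
      simpa [hδC] using this) w hw
  have hnγ : ‖φ (γ w s)‖ * (s : ℝ) ^ (m * s) ≤ (B₄ * s ^ 2) ^ s := by
    rw [← hFγ w hw s, norm_mul, norm_pow, Complex.norm_intCast, mul_assoc]
    calc _ ≤ |(δ : ℝ)| ^ (2 * s) * ((B₂ * s) ^ s * |(δ : ℝ)| ^ (2 * s) * (B * s) ^ s) := by
          gcongr
      _ = (B₂ * B * (|(δ : ℝ)| ^ 2 * |(δ : ℝ)| ^ 2) * s ^ 2) ^ s := by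
          rw [pow_mul]; simp only [mul_pow]; ring
      _ ≤ _ := by
          gcongr
          rw [hB₄]
          exact le_mul_of_one_le_right (by positivity) h427
  have hhγ : house (γ w s : K) ≤ (B₄ * s ^ 2) ^ s := by
    have hr2 : (r : ℝ) ^ 2 ≤ 4 ^ s := by
      have h2 : (s : ℝ) ≤ 2 ^ s := by exact_mod_cast (Nat.lt_two_pow_self (n := s)).le
      have h3 : (r : ℝ) ≤ s := by exact_mod_cast hrs
      calc (r : ℝ) ^ 2 ≤ (2 ^ s) ^ 2 := by gcongr; linarith
        _ = _ := by rw [← pow_mul, mul_comm, pow_mul]; norm_num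
    have h1 : house (γ w s : K) ≤ ∑ i ∈ Finset.range r, ∑ j ∈ Finset.range r,
        (B₂ * s) ^ s * (27 * H ^ 6 * s) ^ s := by
      simp only [hγ, map_sum, map_mul]
      refine (house_sum_le_sum_house _ _).trans (Finset.sum_le_sum fun i hi =>
        (house_sum_le_sum_house _ _).trans (Finset.sum_le_sum fun j hj => ?_))
      rw [Finset.mem_range] at hi hj
      refine (house_mul_le _ _).trans (mul_le_mul ((hξ'B i hi j hj).trans hBs)
        (hτH w hw s s i j hs1 le_rfl (by omega) (by omega)) (house_nonneg _) (by positivity))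
    refine h1.trans ?_
    simp only [Finset.sum_const, Finset.card_range, nsmul_eq_mul]
    calc _ = (r : ℝ) ^ 2 * ((B₂ * s) ^ s * (27 * H ^ 6 * s) ^ s) := by ring
      _ ≤ 4 ^ s * ((B₂ * s) ^ s * (27 * H ^ 6 * s) ^ s) := by gcongr
      _ = (B₂ * (4 * (27 * H ^ 6)) * s ^ 2) ^ s := by simp only [mul_pow]; ring
      _ ≤ _ := by
          gcongr
          rw [hB₄, mul_assoc B₂ B]
          gcongr
          exact le_mul_of_one_le_right (by positivity) (one_le_mul_of_one_le_of_one_le hB1 hd4)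
  have hliou := one_le_norm_mul_house_pow φ hγw
  rw [← hD] at hliou
  have hB₄0 : 0 ≤ B₄ := by
    rw [hB₄]
    exact mul_nonneg (mul_nonneg (by linarith) (by linarith)) (by linarith)
  have hfin : (s : ℝ) ^ (m * s) ≤ ((B₄ * s ^ 2) ^ s) ^ D := by
    calc (s : ℝ) ^ (m * s) ≤ (s : ℝ) ^ (m * s) *
          (‖φ (γ w s)‖ * house (γ w s : K) ^ (D - 1)) := le_mul_of_one_le_right (by positivity) hliou
      _ = (‖φ (γ w s)‖ * (s : ℝ) ^ (m * s)) * house (γ w s : K) ^ (D - 1) := by ring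
      _ ≤ (B₄ * s ^ 2) ^ s * ((B₄ * s ^ 2) ^ s) ^ (D - 1) := by
          gcongr
          · exact pow_nonneg (house_nonneg _) _
          · exact house_nonneg _
      _ = _ := by rw [← pow_succ', Nat.sub_add_cancel hDpos]
  rw [pow_mul, ← pow_mul (B₄ * _) s, mul_comm s, pow_mul] at hfin
  have hfin' := le_of_pow_le_pow_left₀ (by omega : s ≠ 0) (by positivity) hfin
  rw [hm, pow_succ, mul_pow, ← pow_mul, mul_comm] at hfin'
  have hfin2 : (s : ℝ) ≤ B₄ ^ D := le_of_mul_le_mul_right hfin' (by positivity)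
  have : (t₁ : ℝ) ≤ s := by
    have : t₁ ≤ s := by omega
    exact_mod_cast this
  linarith

end SchTwo

/-! ### Choice of the points -/

namespace SchTwo

open Filter Topology NumberField

/-- A common integer denominator for finitely many elements of a number field `K ⊆ ℂ`. -/
lemma exists_common_denominator (K : IntermediateField ℚ ℂ) [NumberField K] (S : Finset ℂ)
    (hS : ∀ z ∈ S, z ∈ K) : ∃ δ : ℤ, δ ≠ 0 ∧ ∃ u : ℂ → 𝓞 K, ∀ z ∈ S,
      algebraMap K ℂ (u z) = δ * z := by
  classical
  obtain ⟨δ, hδ, h⟩ := exists_integral_multiples ℤ ℚ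
    (S.attach.image fun z : S => (⟨z.1, hS z.1 z.2⟩ : K))
  have h' : ∀ z ∈ S, ∃ u : 𝓞 K, algebraMap K ℂ u = δ * z := fun z hz => by
    have h1 := h ⟨z, hS z hz⟩ (Finset.mem_image.2 ⟨⟨z, hz⟩, Finset.mem_attach _ _, rfl⟩)
    refine ⟨⟨_, h1⟩, ?_⟩
    simp
  choose! u hu using h'
  exact ⟨δ, hδ, u, hu⟩

/-- If `α, g₂ ∈ K`, there is no point off the lattice at which `e^{αz}`, `℘` and `℘'` all take values
in the number field `K`. -/
lemma no_point (L : PeriodPair) {α : ℂ} (hα : α ≠ 0) (K : IntermediateField ℚ ℂ)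
    [NumberField K] (hαK : α ∈ K) (hg : L.g₂ ∈ K) {p : ℂ} (hp : p ∈ goodSet L α K) : False := by
  classical
  obtain ⟨W, hW, hcard⟩ := (goodSet_infinite L α K hg hp).exists_subset_card_eq
    (6 * (2 * Module.finrank ℚ K + 1))
  have hg2 : L.g₂ / 2 ∈ K := div_mem hg (by exact_mod_cast K.natCast_mem 2)
  obtain ⟨δ, hδ, u, hu⟩ := exists_common_denominator K
    ({α, L.g₂ / 2} ∪ W.image (fun w => Complex.exp (α * w)) ∪ W.image L.weierstrassP ∪
      W.image L.derivWeierstrassP) (by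
    intro z hz
    simp only [Finset.mem_union, Finset.mem_insert, Finset.mem_singleton, Finset.mem_image] at hz
    rcases hz with (((rfl | rfl) | ⟨w, hw, rfl⟩) | ⟨w, hw, rfl⟩) | ⟨w, hw, rfl⟩
    · exact hαK
    · exact hg2
    · exact (hW hw).2.1
    · exact (hW hw).2.2.1
    · exact (hW hw).2.2.2)
  refine core L hα (algebraMap K ℂ) W (fun w hw => (hW hw).1) hcard hδ (u α) (u (L.g₂ / 2))
    (fun w => u (Complex.exp (α * w))) (fun w => u (L.weierstrassP w))
    (fun w => u (L.derivWeierstrassP w)) (hu _ ?_) (hu _ ?_) (fun w hw => hu _ ?_)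
    (fun w hw => hu _ ?_) (fun w hw => hu _ ?_)
  · simp
  · simp
  · simp only [Finset.mem_union]
    exact .inl (.inl (.inr (Finset.mem_image_of_mem _ hw)))
  · simp only [Finset.mem_union]
    exact .inl (.inr (Finset.mem_image_of_mem _ hw))
  · simp only [Finset.mem_union]
    exact .inr (Finset.mem_image_of_mem _ hw)

end SchTwo

open SchTwo

/-- **Schneider's theorem (second form).** If `Ω` is a lattice in `ℂ`, `p ∈ ℂ ∖ Ω` and `α` is a
nonzero complex number, then at least one of the five numbers `α`, `g₂`, `g₃`, `e^{αp}`, `℘(p)`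
is transcendental over `ℚ`. -/
theorem schneider_two (ω₁ ω₂ : ℂ) (hΩ : IsLatticeBasis ω₁ ω₂)
    (p : ℂ) (hp : p ∉ LatticePts ω₁ ω₂) (α : ℂ) (hα : α ≠ 0) :
    Transcendental ℚ α ∨ Transcendental ℚ (g2 ω₁ ω₂) ∨ Transcendental ℚ (g3 ω₁ ω₂) ∨
      Transcendental ℚ (Complex.exp (α * p)) ∨ Transcendental ℚ (wP ω₁ ω₂ p) := by
  by_contra hcon
  simp only [Transcendental, not_or, not_not] at hcon
  obtain ⟨h1, h2, h3, h4, h5⟩ := hcon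
  let L : PeriodPair := ⟨ω₁, ω₂, hΩ⟩
  have hpL : p ∉ L.lattice := fun h => hp ((mem_lattice_iff L p).1 h)
  rw [show g2 ω₁ ω₂ = L.g₂ from g2_eq L] at h2
  rw [show g3 ω₁ ω₂ = L.g₃ from g3_eq L] at h3
  rw [show wP ω₁ ω₂ p = L.weierstrassP p from wP_eq L hpL] at h5
  have h6 : IsAlgebraic ℚ (L.derivWeierstrassP p) := by
    refine IsAlgebraic.of_pow (n := 2) (by norm_num) ?_
    rw [L.derivWeierstrassP_sq p hpL]
    have h4' : IsAlgebraic ℚ (4 : ℂ) := by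
      simpa using isAlgebraic_algebraMap (R := ℚ) (A := ℂ) (4 : ℚ)
    exact ((h4'.mul (h5.pow 3)).sub (h2.mul h5)).sub h3
  let S : Set ℂ := {α, L.g₂, Complex.exp (α * p), L.weierstrassP p, L.derivWeierstrassP p}
  have hSf : S.Finite := by simp [S]
  have hSa : ∀ z ∈ S, IsIntegral ℚ z := by
    rintro z (rfl | rfl | rfl | rfl | rfl)
    exacts [h1.isIntegral, h2.isIntegral, h4.isIntegral, h5.isIntegral, h6.isIntegral]
  let K := IntermediateField.adjoin ℚ S
  have : Finite S := hSf
  have : FiniteDimensional ℚ K := IntermediateField.finiteDimensional_adjoin hSa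
  have : NumberField K := ⟨⟩
  have hS : S ⊆ K := IntermediateField.subset_adjoin ℚ S
  exact no_point L hα K (hS (by simp [S])) (hS (by simp [S])) (p := p)
    ⟨hpL, hS (by simp [S]), hS (by simp [S]), hS (by simp [S])⟩
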